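/- arXiv:1703.10347 — 2 statements merged into one kernel-verified Lean document; each statement's English description precedes it below -/
import Mathlib

section
/- Let k ≥ 3 be an integer. (a) The double series Z_k(s, w) = ∑_{h≥1} ∑_{n≥0} r_k(n+h) r_k(n) / ((n+h)^{s + k/2 − 1} h^w) converges absolutely for all s, w ∈ ℂ with Re s > 1 + k/2 and Re w ≥ 0. (b) Define W_k(s) = ∑_{n≥1} r_k(n)²/n^{s+k} + 2 Z_k(s + k/2 + 1, 0). Then for every s ∈ ℂ with Re s > 2 and every real σ with 1 < σ < Re s − 1, the integral below converges absolutely and ∑_{n≥1} S_k(n)²/n^{s+k} = ζ(s+k) + W_k(s) + (1/2π) ∫_{−∞}^{∞} W_k(s − σ − it) ζ(σ + it) Γ(σ + it) Γ(s + k − σ − it) / Γ(s + k) dt. -/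
open scoped Real

/-- `rk k m` = number of ways to write `m` as a sum of `k` integer squares. -/
noncomputable def rk (k m : ℕ) : ℕ :=
  Nat.card {v : Fin k → ℤ // (∑ i, (v i) ^ 2) = (m : ℤ)}

/-- `Sk k t` = number of lattice points of `ℤ^k` in the closed ball of radius `√t`. -/
noncomputable def Sk (k : ℕ) (t : ℝ) : ℕ :=
  Nat.card {v : Fin k → ℤ // (∑ i, ((v i : ℝ)) ^ 2) ≤ t}

/-- `Vk k` = volume of the unit ball in `ℝ^k`. -/
noncomputable def Vk (k : ℕ) : ℝ :=
  Real.pi ^ ((k : ℝ) / 2) / Real.Gamma ((k : ℝ) / 2 + 1)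

/-- `Pk k t` = lattice point discrepancy of the `k`-dimensional ball of radius `√t`. -/
noncomputable def Pk (k : ℕ) (t : ℝ) : ℝ :=
  (Sk k t : ℝ) - Vk k * t ^ ((k : ℝ) / 2)

/-- Value of the (analytically continued) Riemann zeta function at a real point. -/
noncomputable def rzeta (x : ℝ) : ℝ := (riemannZeta (x : ℂ)).re

/-- The Riemann zeta function with its 2-factor removed. -/
noncomputable def rzeta2 (x : ℝ) : ℝ := (1 - (2 : ℝ) ^ (-x)) * rzeta x

/-- The constant `C_k` for `k ≥ 4`. -/
noncomputable def Ck (k : ℕ) : ℝ :=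
  ((k : ℝ) ^ 2 / 24) * (Vk k) ^ 2 +
    Real.pi ^ (k : ℝ) * rzeta ((k : ℝ) - 2) * (1 + (2 : ℝ) ^ ((3 : ℝ) - (k : ℝ))) /
      (12 * (Real.Gamma ((k : ℝ) / 2)) ^ 2 * rzeta2 (k : ℝ))

open Complex MeasureTheory

/-- The shifted convolution sum `Z_k(s, w)`, summing over shifts `h = p.1 + 1 ≥ 1` and
`n = p.2 ≥ 0`. -/
noncomputable def Zk (k : ℕ) (s w : ℂ) : ℂ :=
  ∑' p : ℕ × ℕ, (rk k (p.2 + (p.1 + 1)) : ℂ) * (rk k p.2 : ℂ) /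
    (((p.2 : ℂ) + ((p.1 : ℂ) + 1)) ^ (s + (k : ℂ) / 2 - 1) * ((p.1 : ℂ) + 1) ^ w)

/-- `W_k(s)`, the diagonal plus off-diagonal part. -/
noncomputable def Wk (k : ℕ) (s : ℂ) : ℂ :=
  (∑' n : ℕ, ((rk k (n + 1) : ℂ)) ^ 2 / ((n : ℂ) + 1) ^ (s + (k : ℂ)))
    + 2 * Zk k (s + (k : ℂ) / 2 + 1) 0

/-!
`S_k(n)²` counts the pairs of lattice points of squared norm at most `n`. Sorting the pairs by the
larger of the two squared norms gives `S_k(n)² = a 0 + a 1 + ⋯ + a n` with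
`a m = r_k(m)² + 2 r_k(m) ∑_{j < m} r_k(j)`, and `W_k(s)` is the Dirichlet series of `a` at `s + k`.
The Dirichlet series of the partial sums of `a` at `z` is
`∑_{n ≥ 1} (a 0 + a n) n^(-z) + ∑_{m, l ≥ 1} a m (m + l)^(-z)`. The Mellin–Barnes formula
`(m + l)^(-z) = (1 / 2πi) ∫ m^(w - z) l^(-w) B(w, z - w) dw`, which is Mellin inversion of Euler's
beta integral, turns the double sum into the integral of `∑ a m m^(w - z)` times `ζ(w) B(w, z - w)`.
-/

section VerticalLines

variable {σ : ℝ}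

/-- The contour integral `(1 / 2πi) ∫ f(w) dw` along the line `Re w = σ`, parametrised by the
imaginary part. -/
noncomputable def verticalIntegral (f : ℂ → ℂ) (σ : ℝ) : ℂ :=
  (1 / (2 * (π : ℂ))) * ∫ t : ℝ, f (σ + t * I)

theorem verticalIntegral_congr {f g : ℂ → ℂ} (h : ∀ w : ℂ, w.re = σ → f w = g w) :
    verticalIntegral f σ = verticalIntegral g σ := by
  have hline (t : ℝ) : f (σ + t * I) = g (σ + t * I) := h _ (by simp)
  simp only [verticalIntegral, hline]

theorem verticalIntegral_const_mul (c : ℂ) (f : ℂ → ℂ) :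
    verticalIntegral (fun w => c * f w) σ = c * verticalIntegral f σ := by
  rw [verticalIntegral, integral_const_mul, mul_left_comm, verticalIntegral]

theorem mellinInv_eq_verticalIntegral (f : ℂ → ℂ) (x : ℝ) :
    mellinInv σ f x = verticalIntegral (fun w => (x : ℂ) ^ (-w) * f w) σ := by
  simp [mellinInv, verticalIntegral]

section Kernel

variable {ι : Type*} {c : ι → ℂ → ℂ} {B : ι → ℝ} {K : ℂ → ℂ}

theorem verticalIntegrable_mul_of_norm_le {f : ℂ → ℂ} {C : ℝ}
    (hf : Continuous fun t : ℝ => f (σ + t * I)) (hfC : ∀ w : ℂ, w.re = σ → ‖f w‖ ≤ C)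
    (hK : VerticalIntegrable K σ) : VerticalIntegrable (fun w => f w * K w) σ :=
  Integrable.bdd_mul hK hf.aestronglyMeasurable (.of_forall fun _ => hfC _ (by simp))

theorem verticalIntegrable_tsum_mul (hK : VerticalIntegrable K σ) (hc : ∀ i, Continuous (c i))
    (hB : Summable B) (hcB : ∀ i (w : ℂ), w.re = σ → ‖c i w‖ ≤ B i) :
    VerticalIntegrable (fun w => (∑' i, c i w) * K w) σ :=
  verticalIntegrable_mul_of_norm_le
    (continuous_tsum (fun i => (hc i).comp (by fun_prop)) hB fun i _ => hcB i _ (by simp))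
    (fun w hw => tsum_of_norm_bounded hB.hasSum fun i => hcB i w hw) hK

theorem hasSum_verticalIntegral_mul [Countable ι] (hK : VerticalIntegrable K σ)
    (hc : ∀ i, Continuous (c i)) (hB : Summable B)
    (hcB : ∀ i (w : ℂ), w.re = σ → ‖c i w‖ ≤ B i) :
    HasSum (fun i => verticalIntegral (fun w => c i w * K w) σ)
      (verticalIntegral (fun w => (∑' i, c i w) * K w) σ) := by
  have hint (i : ι) : VerticalIntegrable (fun w => c i w * K w) σ :=
    verticalIntegrable_mul_of_norm_le ((hc i).comp (by fun_prop)) (hcB i) hK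
  have hsum : Summable fun i => ∫ t : ℝ, ‖c i (σ + t * I) * K (σ + t * I)‖ := by
    refine (hB.mul_right (∫ t : ℝ, ‖K (σ + t * I)‖)).of_nonneg_of_le
      (fun i => integral_nonneg fun _ => norm_nonneg _) fun i => ?_
    rw [← integral_const_mul]
    refine integral_mono (hint i).norm (hK.norm.const_mul (B i)) fun t => ?_
    simp only [norm_mul]
    gcongr
    exact hcB i _ (by simp)
  have h := (hasSum_integral_of_summable_integral_norm hint hsum).mul_left (1 / (2 * (π : ℂ)))
  simpa only [verticalIntegral, tsum_mul_right] using h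

end Kernel

end VerticalLines

section Gamma

theorem continuousAt_Gamma_of_re_pos {s : ℂ} (hs : 0 < s.re) : ContinuousAt Gamma s :=
  continuousAt_Gamma s fun m h => Gamma_ne_zero_of_re_pos hs ((Gamma_eq_zero_iff s).2 ⟨m, h⟩)

theorem norm_Gamma_le_Gamma_re {s : ℂ} (hs : 0 < s.re) : ‖Gamma s‖ ≤ Real.Gamma s.re := by
  rw [Gamma_eq_integral hs, Real.Gamma_eq_integral hs]
  refine (norm_integral_le_integral_norm _).trans_eq
    (setIntegral_congr_fun measurableSet_Ioi fun x hx => ?_)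
  simp [norm_cpow_eq_rpow_re_of_pos (Set.mem_Ioi.1 hx), norm_exp]

/-- Applying `Γ(w + 1) = w Γ(w)` twice yields the decay `O(1 / |w|²)` on vertical lines. -/
theorem norm_Gamma_le_div_sq {w : ℂ} (hw : 0 < w.re) :
    ‖Gamma w‖ ≤ Real.Gamma (w.re + 2) / ‖w‖ ^ 2 := by
  have hw0 : w ≠ 0 := fun h => by simp [h] at hw
  have hw1 : w + 1 ≠ 0 := fun h => by
    have := congrArg re h
    simp only [add_re, one_re, zero_re] at this
    linarith
  have hΓ : Gamma (w + 2) = (w + 1) * (w * Gamma w) := by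
    rw [← Gamma_add_one w hw0, ← Gamma_add_one _ hw1]
    ring_nf
  have hle : ‖w‖ ≤ ‖w + 1‖ := by
    rw [← sq_le_sq₀ (norm_nonneg _) (norm_nonneg _), Complex.sq_norm, Complex.sq_norm,
      normSq_apply, normSq_apply, add_re, add_im, one_re, one_im]
    nlinarith
  rw [le_div_iff₀ (by positivity)]
  calc ‖Gamma w‖ * ‖w‖ ^ 2 ≤ ‖w + 1‖ * (‖w‖ * ‖Gamma w‖) := by
        nlinarith [mul_le_mul_of_nonneg_right hle (by positivity : 0 ≤ ‖w‖ * ‖Gamma w‖)]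
    _ = ‖Gamma (w + 2)‖ := by rw [hΓ, norm_mul, norm_mul]
    _ ≤ Real.Gamma (w.re + 2) := by
        simpa using norm_Gamma_le_Gamma_re (s := w + 2) (by rw [add_re, re_ofNat]; linarith)

theorem verticalIntegrable_Gamma {σ : ℝ} (hσ : 0 < σ) : VerticalIntegrable Gamma σ := by
  have hbound : Integrable fun t : ℝ => Real.Gamma (σ + 2) / σ ^ 2 * (1 + (t / σ) ^ 2)⁻¹ :=
    (integrable_inv_one_add_sq.comp_div hσ.ne').const_mul _
  refine hbound.mono' (Continuous.aestronglyMeasurable (continuous_iff_continuousAt.2 fun t => ?_))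
    (.of_forall fun t => ?_)
  · exact (continuousAt_Gamma_of_re_pos (by simpa)).comp (f := fun t : ℝ => (σ + t * I : ℂ))
      (by fun_prop)
  · have hnorm : ‖(σ + t * I : ℂ)‖ ^ 2 = σ ^ 2 * (1 + (t / σ) ^ 2) := by
      rw [Complex.sq_norm, normSq_add_mul_I]
      field_simp
    have h := norm_Gamma_le_div_sq (w := σ + t * I) (by simpa)
    rw [hnorm] at h
    refine h.trans_eq ?_
    simp only [add_re, ofReal_re, mul_re, I_re, mul_zero, ofReal_im, I_im, mul_one, sub_self,
      add_zero]
    field_simp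

theorem verticalIntegrable_betaIntegral {z : ℂ} {σ : ℝ} (hσ : 0 < σ) (hσz : σ < z.re) :
    VerticalIntegrable (fun w => betaIntegral w (z - w)) σ := by
  have hcont : Continuous fun t : ℝ => Gamma (z - (σ + t * I)) / Gamma z :=
    continuous_iff_continuousAt.2 fun t =>
      ((continuousAt_Gamma_of_re_pos (by simpa)).comp (f := fun t : ℝ => (z - (σ + t * I) : ℂ))
        (by fun_prop)).div_const _
  have hbound (w : ℂ) (hw : w.re = σ) :
      ‖Gamma (z - w) / Gamma z‖ ≤ Real.Gamma (z.re - σ) / ‖Gamma z‖ := by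
    rw [norm_div]
    gcongr
    simpa [hw] using norm_Gamma_le_Gamma_re (s := z - w) (by simpa [hw])
  refine (verticalIntegrable_mul_of_norm_le (f := fun w => Gamma (z - w) / Gamma z) hcont hbound
    (verticalIntegrable_Gamma hσ)).congr (.of_forall fun t => ?_)
  simp only
  rw [betaIntegral_eq_Gamma_mul_div _ _ (by simpa) (by simpa), add_sub_cancel]
  ring

end Gamma

section MellinBarnes

open Set

theorem image_div_one_add_Ioi : (fun x : ℝ => x / (1 + x)) '' Ioi 0 = Ioo 0 1 := by
  ext y
  simp only [mem_image, mem_Ioi, mem_Ioo]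
  constructor
  · rintro ⟨x, hx, rfl⟩
    exact ⟨by positivity, by rw [div_lt_one (by positivity)]; linarith⟩
  · rintro ⟨h0, h1⟩
    have : 0 < 1 - y := by linarith
    exact ⟨y / (1 - y), by positivity, by field_simp; ring⟩

theorem monotoneOn_div_one_add_Ioi : MonotoneOn (fun x : ℝ => x / (1 + x)) (Ioi 0) := by
  intro x (hx : 0 < x) y (hy : 0 < y) hxy
  simp only
  rw [div_le_div_iff₀ (by positivity) (by positivity)]
  linarith

theorem hasDerivAt_div_one_add {x : ℝ} (hx : 1 + x ≠ 0) :
    HasDerivAt (fun x : ℝ => x / (1 + x)) (1 / (1 + x) ^ 2) x := by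
  convert! (hasDerivAt_id x).div ((hasDerivAt_id x).const_add 1) hx using 1
  simp

theorem betaIntegrand_comp_div_one_add (w z : ℂ) {x : ℝ} (hx : 0 < x) :
    (1 / (1 + x) ^ 2) • (((x / (1 + x) : ℝ) : ℂ) ^ (w - 1) *
      (1 - ((x / (1 + x) : ℝ) : ℂ)) ^ (z - w - 1)) = (x : ℂ) ^ (w - 1) • (1 + (x : ℂ)) ^ (-z) := by
  have h1 : 0 ≤ 1 + x := by positivity
  have h1' : ((1 + x : ℝ) : ℂ) ≠ 0 := ofReal_ne_zero.2 (by positivity)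
  have hsub : 1 - ((x / (1 + x) : ℝ) : ℂ) = ((1 + x : ℝ) : ℂ)⁻¹ := by
    push_cast at h1' ⊢
    field_simp
    ring
  have hexp : -z = -2 + (-(w - 1) + -(z - w - 1)) := by ring
  rw [hsub, ofReal_div, div_cpow_ofReal_nonneg hx.le h1, inv_cpow_ofReal_nonneg h1, real_smul,
    smul_eq_mul, ← ofReal_one, ← ofReal_add, hexp, cpow_add _ _ h1', cpow_add _ _ h1', cpow_neg,
    cpow_neg, cpow_neg, cpow_ofNat]
  push_cast
  ring

/-- Euler's beta integral after the substitution `u = x / (1 + x)`. -/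
theorem hasMellin_one_add_cpow_neg {w z : ℂ} (hw : 0 < w.re) (hwz : w.re < z.re) :
    HasMellin (fun x : ℝ => (1 + (x : ℂ)) ^ (-z)) w (betaIntegral w (z - w)) := by
  have hderiv (x : ℝ) (hx : 0 < x) := (hasDerivAt_div_one_add (x := x)
    (by positivity)).hasDerivWithinAt (s := Ioi 0)
  have hcongr (x : ℝ) (hx : 0 < x) := betaIntegrand_comp_div_one_add w z hx
  constructor
  · have hint := (intervalIntegrable_iff_integrableOn_Ioo_of_le zero_le_one).1
      (betaIntegral_convergent hw (v := z - w) (by simpa))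
    rw [← image_div_one_add_Ioi, integrableOn_image_iff_integrableOn_deriv_smul_of_monotoneOn
      measurableSet_Ioi hderiv monotoneOn_div_one_add_Ioi] at hint
    exact hint.congr_fun hcongr measurableSet_Ioi
  · rw [betaIntegral, intervalIntegral.integral_of_le zero_le_one,
      integral_Ioc_eq_integral_Ioo, ← image_div_one_add_Ioi,
      integral_image_eq_integral_deriv_smul_of_monotoneOn measurableSet_Ioi hderiv
        monotoneOn_div_one_add_Ioi]
    exact (setIntegral_congr_fun measurableSet_Ioi hcongr).symm

theorem verticalIntegral_betaIntegral_div {z : ℂ} {σ : ℝ} (hσ : 0 < σ) (hσz : σ < z.re) {x y : ℝ}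
    (hx : 0 < x) (hy : 0 < y) :
    verticalIntegral (fun w => betaIntegral w (z - w) / ((x : ℂ) ^ (z - w) * (y : ℂ) ^ w)) σ =
      1 / ((x : ℂ) + y) ^ z := by
  have hx' : (x : ℂ) ≠ 0 := ofReal_ne_zero.2 hx.ne'
  have hyx : 0 < y / x := by positivity
  have hmellin (w : ℂ) (hw : w.re = σ) :
      mellin (fun u : ℝ => (1 + (u : ℂ)) ^ (-z)) w = betaIntegral w (z - w) :=
    (hasMellin_one_add_cpow_neg (by rwa [hw]) (by rwa [hw])).2
  have hinv : mellinInv σ (mellin fun u : ℝ => (1 + (u : ℂ)) ^ (-z)) (y / x) =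
      (1 + ((y / x : ℝ) : ℂ)) ^ (-z) :=
    mellinInv_mellin_eq σ _ hyx (hasMellin_one_add_cpow_neg (by simpa) (by simpa)).1
      ((verticalIntegrable_betaIntegral hσ hσz).congr
        (.of_forall fun t => (hmellin _ (by simp)).symm))
      (ContinuousAt.cpow (by fun_prop) (by fun_prop) (by
        rw [← ofReal_one, ← ofReal_add]
        exact ofReal_mem_slitPlane.2 (by positivity)))
  rw [mellinInv_eq_verticalIntegral] at hinv
  calc verticalIntegral (fun w => betaIntegral w (z - w) / ((x : ℂ) ^ (z - w) * (y : ℂ) ^ w)) σ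
      = verticalIntegral (fun w => (x : ℂ) ^ (-z) * (((y / x : ℝ) : ℂ) ^ (-w) *
          mellin (fun u : ℝ => (1 + (u : ℂ)) ^ (-z)) w)) σ := by
        refine verticalIntegral_congr fun w hw => ?_
        rw [hmellin w hw, ofReal_div, div_cpow_ofReal_nonneg hy.le hx.le, cpow_sub _ _ hx',
          cpow_neg, cpow_neg, cpow_neg]
        ring
    _ = (x : ℂ) ^ (-z) * (1 + ((y / x : ℝ) : ℂ)) ^ (-z) := by
        rw [verticalIntegral_const_mul, hinv]
    _ = 1 / ((x : ℂ) + y) ^ z := by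
        rw [one_div, ← cpow_neg, ← ofReal_one, ← ofReal_add,
          ← mul_cpow_ofReal_nonneg hx.le (by positivity), ofReal_add, ofReal_one, ofReal_div]
        field_simp

end MellinBarnes

section Antidiagonal

open Finset

variable {A : Type*} [AddCommMonoid A] [HasAntidiagonal A]

theorem hasSum_sum_antidiagonal {E : Type*} [AddCommMonoid E] [TopologicalSpace E]
    [ContinuousAdd E] [RegularSpace E] {f : A × A → E} {c : E} (hf : HasSum f c) :
    HasSum (fun n => ∑ p ∈ antidiagonal n, f p) c := by
  refine (HasAntidiagonal.sigmaAntidiagonalEquivProd.hasSum_iff.2 hf).sigma fun n => ?_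
  rw [← sum_coe_sort (antidiagonal n) f]
  exact hasSum_fintype _

theorem summable_of_summable_sum_antidiagonal {f : A × A → ℝ} (hf0 : 0 ≤ f)
    (hf : Summable fun n => ∑ p ∈ antidiagonal n, f p) : Summable f := by
  rw [← HasAntidiagonal.sigmaAntidiagonalEquivProd.summable_iff]
  refine (summable_sigma_of_nonneg fun _ => hf0 _).2
    ⟨fun n => (hasSum_fintype _).summable, hf.congr fun n => ?_⟩
  rw [tsum_fintype, ← sum_coe_sort (antidiagonal n) f]
  rfl

end Antidiagonal

section DirichletSeries

open Finset LSeries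

variable {a b : ℕ → ℂ} {z : ℂ} {σ : ℝ}

theorem LSeriesHasSum_iff_hasSum_add_one {c : ℂ} :
    LSeriesHasSum a z c ↔ HasSum (fun n : ℕ => a (n + 1) / ((n : ℂ) + 1) ^ z) c := by
  rw [LSeriesHasSum, ← hasSum_nat_add_iff' 1]
  simp [term_of_ne_zero]

theorem continuous_term (a : ℕ → ℂ) (n : ℕ) : Continuous fun w => term a w n := by
  rcases eq_or_ne n 0 with rfl | hn
  · simp only [term_zero, continuous_const]
  · simp only [term_of_ne_zero hn]
    have hn' : (n : ℂ) ≠ 0 := Nat.cast_ne_zero.2 hn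
    exact continuous_const.div (continuous_id.const_cpow (.inl hn'))
      fun w h => hn' ((cpow_eq_zero_iff _ _).1 h).1

theorem norm_term_congr_re (a : ℕ → ℂ) {s s' : ℂ} (h : s.re = s'.re) (n : ℕ) :
    ‖term a s n‖ = ‖term a s' n‖ := by
  rw [norm_term_eq, norm_term_eq, h]

theorem continuous_term_mul_term (a b : ℕ → ℂ) (z : ℂ) (p : ℕ × ℕ) :
    Continuous fun w => term a (z - w) p.1 * term b w p.2 :=
  ((continuous_term a p.1).comp (continuous_const.sub continuous_id)).mul (continuous_term b p.2)

theorem norm_term_mul_term (a b : ℕ → ℂ) (z : ℂ) (p : ℕ × ℕ) {w : ℂ} (hw : w.re = σ) :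
    ‖term a (z - w) p.1 * term b w p.2‖ = ‖term a (z - σ) p.1‖ * ‖term b σ p.2‖ := by
  rw [norm_mul, norm_term_congr_re a (s' := z - σ) (by simp [hw]),
    norm_term_congr_re b (s' := σ) (by simp [hw])]

theorem tsum_term_mul_term (ha : LSeriesSummable a (z - σ)) (hb : LSeriesSummable b σ) {w : ℂ}
    (hw : w.re = σ) :
    ∑' p : ℕ × ℕ, term a (z - w) p.1 * term b w p.2 = LSeries a (z - w) * LSeries b w :=
  (tsum_mul_tsum_of_summable_norm (ha.of_re_le_re (by simp [hw])).norm
    (hb.of_re_le_re (by simp [hw])).norm).symm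

theorem verticalIntegral_term_mul_term_mul_betaIntegral (a b : ℕ → ℂ) (hσ : 0 < σ)
    (hσz : σ < z.re) (p : ℕ × ℕ) :
    verticalIntegral (fun w => term a (z - w) p.1 * term b w p.2 * betaIntegral w (z - w)) σ =
      if p.1 = 0 ∨ p.2 = 0 then 0 else a p.1 * b p.2 / ((p.1 + p.2 : ℕ) : ℂ) ^ z := by
  split_ifs with h
  · rcases h with h | h <;> simp [verticalIntegral, h]
  · obtain ⟨h1, h2⟩ := not_or.1 h
    have hMB := verticalIntegral_betaIntegral_div hσ hσz (x := p.1) (y := p.2) (by positivity)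
      (by positivity)
    push_cast at hMB ⊢
    rw [← mul_one_div, ← hMB, ← verticalIntegral_const_mul]
    refine verticalIntegral_congr fun w _ => ?_
    rw [term_of_ne_zero h1, term_of_ne_zero h2]
    ring

theorem verticalIntegrable_LSeries_mul_LSeries_mul_betaIntegral (hσ : 0 < σ) (hσz : σ < z.re)
    (ha : LSeriesSummable a (z - σ)) (hb : LSeriesSummable b σ) :
    VerticalIntegrable (fun w => LSeries a (z - w) * LSeries b w * betaIntegral w (z - w)) σ :=
  (verticalIntegrable_tsum_mul (verticalIntegrable_betaIntegral hσ hσz)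
    (continuous_term_mul_term a b z) (ha.norm.mul_of_nonneg hb.norm (fun _ => norm_nonneg _)
      fun _ => norm_nonneg _) fun p _ hw => (norm_term_mul_term a b z p hw).le).congr
    (.of_forall fun t => by simp only [tsum_term_mul_term ha hb (w := σ + t * I) (by simp)])

/-- Mellin–Barnes separates the variables in `(m + l) ^ (-z)`. -/
theorem LSeriesHasSum_sum_Ioo (hσ : 0 < σ) (hσz : σ < z.re) (ha : LSeriesSummable a (z - σ))
    (hb : LSeriesSummable b σ) :
    LSeriesHasSum (fun n => ∑ m ∈ Ioo 0 n, a m * b (n - m)) z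
      (verticalIntegral (fun w => LSeries a (z - w) * LSeries b w * betaIntegral w (z - w)) σ) := by
  have hpairs := hasSum_verticalIntegral_mul (verticalIntegrable_betaIntegral hσ hσz)
    (continuous_term_mul_term a b z) (ha.norm.mul_of_nonneg hb.norm (fun _ => norm_nonneg _)
      fun _ => norm_nonneg _) fun p _ hw => (norm_term_mul_term a b z p hw).le
  rw [verticalIntegral_congr fun w hw => congrArg (· * betaIntegral w (z - w))
    (tsum_term_mul_term ha hb hw)] at hpairs
  refine (hasSum_sum_antidiagonal hpairs).congr_fun fun n => ?_
  simp only [verticalIntegral_term_mul_term_mul_betaIntegral a b hσ hσz]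
  rw [Finset.Nat.sum_antidiagonal_eq_sum_range_succ_mk]
  rcases eq_or_ne n 0 with rfl | hn
  · simp
  rw [term_of_ne_zero hn, sum_div]
  refine (sum_subset_zero_on_sdiff (fun m hm => ?_) (fun m hm => ?_) fun m hm => ?_)
  all_goals simp only [mem_sdiff, mem_Ioo, mem_range] at hm ⊢
  · lia
  · exact if_pos (by lia)
  · rw [if_neg (by lia), Nat.add_sub_cancel' hm.2.le]

theorem verticalIntegrable_LSeries_mul_riemannZeta_mul_betaIntegral (hσ : 1 < σ)
    (hσz : σ < z.re) (ha : LSeriesSummable a (z - σ)) :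
    VerticalIntegrable (fun w => LSeries a (z - w) * riemannZeta w * betaIntegral w (z - w)) σ :=
  (verticalIntegrable_LSeries_mul_LSeries_mul_betaIntegral (by linarith) hσz ha
    (LSeriesSummable_one_iff.2 (by simpa))).congr
    (.of_forall fun t => by simp only [LSeries_one_eq_riemannZeta (s := σ + t * I) (by simpa)])

theorem LSeriesHasSum_sum_range (hσ : 1 < σ) (hσz : σ < z.re) (ha : LSeriesSummable a (z - σ)) :
    LSeriesHasSum (fun n => ∑ m ∈ range (n + 1), a m) z
      (a 0 * riemannZeta z + LSeries a z +
        verticalIntegral (fun w => LSeries a (z - w) * riemannZeta w * betaIntegral w (z - w))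
          σ) := by
  have hzeta := (LSeriesHasSum_one (hσ.trans hσz)).smul (a 0)
  have haz := (ha.of_re_le_re (s' := z) (by rw [sub_re, ofReal_re]; linarith)).LSeriesHasSum
  have hIoo := LSeriesHasSum_sum_Ioo (by linarith) hσz ha
    (LSeriesSummable_one_iff.2 (by simpa))
  rw [verticalIntegral_congr (g := fun w => LSeries a (z - w) * riemannZeta w *
    betaIntegral w (z - w)) fun w hw => by
      rw [LSeries_one_eq_riemannZeta (by rwa [hw])]] at hIoo
  refine ((hzeta.add haz).add hIoo).congr_fun fun n => term_congr (fun {n} hn => ?_) z n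
  have hIco : Ioo 0 n = Ico 1 n := rfl
  simp only [Pi.add_apply, Pi.smul_apply, Pi.one_apply, smul_eq_mul, mul_one, hIco]
  rw [sum_range_succ, sum_range_eq_add_Ico _ (Nat.pos_of_ne_zero hn), add_right_comm]

end DirichletSeries

section LatticePoints

open Finset

/-- The lattice points of `ℤ^k` in the closed ball of radius `√n`, as a finite set: the bounding
cube makes finiteness manifest. -/
noncomputable def latticeBall (k n : ℕ) : Finset (Fin k → ℤ) :=
  {v ∈ Fintype.piFinset fun _ : Fin k => Icc (-(n.sqrt : ℤ)) n.sqrt | ∑ i, v i ^ 2 ≤ (n : ℤ)}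

theorem mem_latticeBall {k n : ℕ} {v : Fin k → ℤ} :
    v ∈ latticeBall k n ↔ ∑ i, v i ^ 2 ≤ (n : ℤ) := by
  refine mem_filter.trans (and_iff_right_of_imp fun hv => Fintype.mem_piFinset.2 fun i => ?_)
  have hsq : v i ^ 2 ≤ n :=
    (single_le_sum (f := fun i => v i ^ 2) (fun _ _ => sq_nonneg _) (mem_univ i)).trans hv
  have habs : (v i).natAbs ≤ n.sqrt := Nat.le_sqrt'.2 (by zify; simpa using hsq)
  rw [mem_Icc]
  lia

theorem Sk_natCast (k n : ℕ) : Sk k n = #(latticeBall k n) := by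
  rw [Sk, ← Nat.card_eq_finsetCard]
  refine Nat.card_congr (Equiv.subtypeEquivRight fun v => ?_)
  rw [mem_latticeBall]
  exact_mod_cast Iff.rfl

theorem rk_eq_card_filter_latticeBall {k m n : ℕ} (hmn : m ≤ n) :
    rk k m = #{v ∈ latticeBall k n | ∑ i, v i ^ 2 = (m : ℤ)} := by
  rw [rk, ← Nat.card_eq_finsetCard]
  refine Nat.card_congr (Equiv.subtypeEquivRight fun v => ?_)
  rw [mem_filter, mem_latticeBall, and_iff_right_of_imp]
  lia

theorem sum_range_succ_rk (k n : ℕ) : ∑ m ∈ range (n + 1), rk k m = Sk k n := by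
  have hnonneg (v : Fin k → ℤ) : 0 ≤ ∑ i, v i ^ 2 := sum_nonneg fun _ _ => sq_nonneg _
  rw [Sk_natCast, card_eq_sum_card_fiberwise (f := fun v => (∑ i, v i ^ 2).toNat)
    (t := range (n + 1)) fun v hv => ?_]
  · refine sum_congr rfl fun m hm => ?_
    rw [rk_eq_card_filter_latticeBall (Nat.le_of_lt_succ (mem_range.1 hm))]
    congr 1
    refine filter_congr fun v _ => ?_
    have := hnonneg v
    lia
  · have := mem_latticeBall.1 hv
    simp only [coe_range, Set.mem_Iio]
    lia

theorem Sk_natCast_le (k n : ℕ) : Sk k n ≤ (2 * n.sqrt + 1) ^ k := by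
  rw [Sk_natCast]
  refine (card_filter_le _ _).trans_eq ?_
  rw [Fintype.card_piFinset, prod_const, card_univ, Fintype.card_fin, Int.card_Icc]
  congr 1
  lia

theorem Sk_natCast_sq_le (k : ℕ) {n : ℕ} (hn : 1 ≤ n) : Sk k n ^ 2 ≤ 9 ^ k * n ^ k := by
  have h1 : 1 ≤ n.sqrt := Nat.le_sqrt'.2 (by simpa)
  have h2 : n.sqrt ^ 2 ≤ n := Nat.sqrt_le' n
  calc Sk k n ^ 2 ≤ ((2 * n.sqrt + 1) ^ k) ^ 2 := by gcongr; exact Sk_natCast_le k n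
    _ = ((2 * n.sqrt + 1) ^ 2) ^ k := pow_right_comm _ _ _
    _ ≤ (9 * n) ^ k := by gcongr; nlinarith
    _ = 9 ^ k * n ^ k := mul_pow _ _ _

/-- The number of pairs `(u, v)` of lattice points in `ℤ^k` with `‖v‖² < ‖u‖² = m`. -/
noncomputable def strictMaxNormPairs (k m : ℕ) : ℕ := rk k m * ∑ j ∈ range m, rk k j

/-- The number of pairs `(u, v)` of lattice points in `ℤ^k` with `max (‖u‖², ‖v‖²) = m`. -/
noncomputable def maxNormPairs (k m : ℕ) : ℕ := rk k m ^ 2 + 2 * strictMaxNormPairs k m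

theorem sum_range_maxNormPairs (k n : ℕ) :
    ∑ m ∈ range n, maxNormPairs k m = (∑ m ∈ range n, rk k m) ^ 2 := by
  induction n with
  | zero => simp
  | succ n ih =>
    rw [sum_range_succ, sum_range_succ, ih, maxNormPairs, strictMaxNormPairs]
    ring

theorem sum_range_succ_maxNormPairs (k n : ℕ) :
    ∑ m ∈ range (n + 1), maxNormPairs k m = Sk k n ^ 2 := by
  rw [sum_range_maxNormPairs, sum_range_succ_rk]

theorem maxNormPairs_zero (k : ℕ) : maxNormPairs k 0 = 1 := by
  have hball : latticeBall k 0 = {0} := by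
    ext v
    have hnonneg : 0 ≤ ∑ i, v i ^ 2 := sum_nonneg fun _ _ => sq_nonneg _
    rw [mem_latticeBall, Nat.cast_zero, hnonneg.ge_iff_eq', mem_singleton, funext_iff,
      sum_eq_zero_iff_of_nonneg fun _ _ => sq_nonneg _]
    simp
  have h := sum_range_succ_maxNormPairs k 0
  rw [Sk_natCast, hball] at h
  simpa using h

theorem LSeriesSummable_maxNormPairs {k : ℕ} {s : ℂ} (hs : k < s.re) :
    LSeriesSummable (fun m => maxNormPairs k m) s := by
  refine LSeriesSummable_of_sum_norm_bigO (r := k) (.of_bound (9 ^ k)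
    (Filter.eventually_atTop.2 ⟨1, fun n hn => ?_⟩)) (Nat.cast_nonneg k) hs
  have hsum : ∑ m ∈ Icc 1 n, maxNormPairs k m ≤ 9 ^ k * n ^ k :=
    calc ∑ m ∈ Icc 1 n, maxNormPairs k m ≤ ∑ m ∈ range (n + 1), maxNormPairs k m :=
          sum_le_sum_of_subset fun m hm => mem_range.2 (Nat.lt_succ_of_le (mem_Icc.1 hm).2)
      _ = Sk k n ^ 2 := sum_range_succ_maxNormPairs k n
      _ ≤ 9 ^ k * n ^ k := Sk_natCast_sq_le k hn
  simp only [Complex.norm_natCast, Real.rpow_natCast, norm_pow]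
  rw [← Nat.cast_sum, Real.norm_natCast]
  exact_mod_cast hsum

theorem LSeriesSummable_of_le_maxNormPairs {k : ℕ} {f : ℕ → ℕ} {s : ℂ}
    (hf : ∀ m, f m ≤ maxNormPairs k m) (hs : k < s.re) : LSeriesSummable (fun m => f m) s :=
  .of_norm_bounded (LSeriesSummable_maxNormPairs hs).norm fun m =>
    LSeries.norm_term_le s (by simpa using hf m)

theorem LSeriesSummable_rk_sq {k : ℕ} {s : ℂ} (hs : k < s.re) :
    LSeriesSummable (fun m => (rk k m : ℂ) ^ 2) s := by
  simpa using LSeriesSummable_of_le_maxNormPairs (f := fun m => rk k m ^ 2)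
    (fun _ => Nat.le_add_right _ _) hs

theorem LSeriesSummable_strictMaxNormPairs {k : ℕ} {s : ℂ} (hs : k < s.re) :
    LSeriesSummable (fun m => strictMaxNormPairs k m) s :=
  LSeriesSummable_of_le_maxNormPairs (fun m => by rw [maxNormPairs]; lia) hs

theorem sum_antidiagonal_rk_mul_rk_div {K : Type*} [DivisionRing K] (k n : ℕ) (D : ℕ → K) :
    ∑ p ∈ antidiagonal n, (rk k (p.2 + (p.1 + 1)) * rk k p.2 : K) / D (p.2 + (p.1 + 1)) =
      strictMaxNormPairs k (n + 1) / D (n + 1) := by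
  rw [strictMaxNormPairs, ← Nat.sum_antidiagonal_swap,
    Nat.sum_antidiagonal_eq_sum_range_succ_mk, Nat.cast_mul, Nat.cast_sum, mul_sum, sum_div]
  refine sum_congr rfl fun m hm => ?_
  have : m + (n - m + 1) = n + 1 := by have := mem_range.1 hm; lia
  simp only [Prod.fst_swap, Prod.snd_swap, this]

theorem summable_rk_mul_rk_div_rpow {k : ℕ} {x : ℝ} (hx : k < x) :
    Summable fun p : ℕ × ℕ =>
      (rk k (p.2 + (p.1 + 1)) * rk k p.2 : ℝ) / ((p.2 + (p.1 + 1) : ℕ) : ℝ) ^ x := by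
  refine summable_of_summable_sum_antidiagonal (fun p => by positivity) ?_
  simp only [sum_antidiagonal_rk_mul_rk_div k _ fun m : ℕ => (m : ℝ) ^ x]
  refine ((summable_nat_add_iff 1).2
    (LSeriesSummable_strictMaxNormPairs (s := x) (by simpa)).norm).congr fun n => ?_
  rw [LSeries.norm_term_eq, if_neg n.succ_ne_zero, norm_natCast, ofReal_re]

theorem summable_norm_Zk {k : ℕ} {s w : ℂ} (hs : 1 + (k : ℝ) / 2 < s.re) (hw : 0 ≤ w.re) :
    Summable fun p : ℕ × ℕ => ‖(rk k (p.2 + (p.1 + 1)) : ℂ) * (rk k p.2 : ℂ) /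
      (((p.2 : ℂ) + ((p.1 : ℂ) + 1)) ^ (s + (k : ℂ) / 2 - 1) * ((p.1 : ℂ) + 1) ^ w)‖ := by
  have hre : (s + (k : ℂ) / 2 - 1).re = s.re + k / 2 - 1 := by simp
  refine .of_nonneg_of_le (fun p => norm_nonneg _) (fun p => ?_)
    (summable_rk_mul_rk_div_rpow (k := k) (x := s.re + k / 2 - 1) (by linarith))
  have hpow : 1 ≤ ‖((p.1 : ℂ) + 1) ^ w‖ := by
    rw [← Nat.cast_succ, norm_natCast_cpow_of_pos p.1.succ_pos]
    exact Real.one_le_rpow (by simp) hw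
  have hbase : (p.2 : ℂ) + ((p.1 : ℂ) + 1) = ((p.2 + (p.1 + 1) : ℕ) : ℂ) := by push_cast; rfl
  rw [norm_div, norm_mul, norm_mul, Complex.norm_natCast, Complex.norm_natCast, hbase,
    norm_natCast_cpow_of_pos (by positivity), hre]
  gcongr
  exact le_mul_of_one_le_right (by positivity) hpow

theorem Zk_zero_eq_LSeries {k : ℕ} {s : ℂ} (hs : 1 + (k : ℝ) / 2 < s.re) :
    Zk k s 0 = LSeries (fun m => strictMaxNormPairs k m) (s + (k : ℂ) / 2 - 1) := by
  have hZ := hasSum_sum_antidiagonal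
    (summable_norm_Zk (k := k) hs (w := 0) le_rfl).of_norm.hasSum
  refine (LSeriesHasSum_iff_hasSum_add_one.2 (hZ.congr_fun fun n => ?_)).LSeries_eq.symm
  simpa using (sum_antidiagonal_rk_mul_rk_div k n
    fun m : ℕ => (m : ℂ) ^ (s + (k : ℂ) / 2 - 1)).symm

theorem LSeries_maxNormPairs {k : ℕ} {s : ℂ} (hs : k < s.re) :
    LSeries (fun m => maxNormPairs k m) s =
      LSeries (fun m => (rk k m : ℂ) ^ 2) s + 2 * LSeries (fun m => strictMaxNormPairs k m) s := by
  rw [← LSeries_smul, ← LSeries_add (LSeriesSummable_rk_sq hs)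
    ((LSeriesSummable_strictMaxNormPairs hs).smul 2)]
  congr 1
  ext m
  simp [maxNormPairs]

theorem Wk_eq_LSeries {k : ℕ} {s : ℂ} (hs : 0 < s.re) :
    Wk k s = LSeries (fun m => maxNormPairs k m) (s + k) := by
  have hsk : (k : ℝ) < (s + k).re := by simpa
  have hexp : s + k / 2 + 1 + k / 2 - 1 = s + k := by ring
  have hZ : 1 + (k : ℝ) / 2 < (s + k / 2 + 1).re := by simpa [add_comm, ← add_assoc] using hs
  rw [Wk, Zk_zero_eq_LSeries hZ, hexp, LSeries_maxNormPairs hsk,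
    (LSeriesHasSum_iff_hasSum_add_one.1 (LSeriesSummable_rk_sq hsk).LSeriesHasSum).tsum_eq]

theorem LSeriesHasSum_Sk_sq (k : ℕ) {z : ℂ} {σ : ℝ} (hσ : 1 < σ) (hσz : σ + k < z.re) :
    LSeriesHasSum (fun n => (Sk k n : ℂ) ^ 2) z
      (riemannZeta z + LSeries (fun m => maxNormPairs k m) z +
        verticalIntegral (fun w => LSeries (fun m => maxNormPairs k m) (z - w) * riemannZeta w *
          betaIntegral w (z - w)) σ) := by
  have : (0 : ℝ) ≤ k := k.cast_nonneg
  have h := LSeriesHasSum_sum_range hσ (by linarith)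
    (LSeriesSummable_maxNormPairs (k := k) (by rw [sub_re, ofReal_re]; linarith))
  rw [maxNormPairs_zero, Nat.cast_one, one_mul] at h
  refine h.congr_fun fun n => LSeries.term_congr (fun {n} _ => ?_) z n
  exact_mod_cast (sum_range_succ_maxNormPairs k n).symm

theorem Wk_mul_zeta_mul_Gamma_eq {k : ℕ} {s w : ℂ} (hw : 0 < w.re) (hws : w.re < s.re) :
    Wk k (s - w) * riemannZeta w * Gamma w * Gamma (s + k - w) / Gamma (s + k) =
      LSeries (fun m => maxNormPairs k m) (s + k - w) * riemannZeta w *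
        betaIntegral w (s + k - w) := by
  have : (0 : ℝ) ≤ k := k.cast_nonneg
  rw [Wk_eq_LSeries (by simpa), sub_add_eq_add_sub,
    betaIntegral_eq_Gamma_mul_div _ _ hw (by rw [sub_re, add_re, natCast_re]; linarith),
    add_sub_cancel]
  ring

end LatticePoints

theorem DSkSk_decomposition_general (k : ℕ) :
    (∀ s w : ℂ, 1 + (k : ℝ) / 2 < s.re → 0 ≤ w.re →
      Summable (fun p : ℕ × ℕ =>
        ‖(rk k (p.2 + (p.1 + 1)) : ℂ) * (rk k p.2 : ℂ) /
          (((p.2 : ℂ) + ((p.1 : ℂ) + 1)) ^ (s + (k : ℂ) / 2 - 1) * ((p.1 : ℂ) + 1) ^ w)‖)) ∧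
    (∀ s : ℂ, ∀ σ : ℝ, 1 < σ → σ < s.re →
      Integrable (fun t : ℝ =>
        Wk k (s - (σ : ℂ) - t * Complex.I) * riemannZeta ((σ : ℂ) + t * Complex.I)
          * Complex.Gamma ((σ : ℂ) + t * Complex.I)
          * Complex.Gamma (s + (k : ℂ) - (σ : ℂ) - t * Complex.I)
          / Complex.Gamma (s + (k : ℂ))) ∧
      HasSum (fun n : ℕ => ((Sk k ((n : ℝ) + 1) : ℂ)) ^ 2 / ((n : ℂ) + 1) ^ (s + (k : ℂ)))
        (riemannZeta (s + (k : ℂ)) + Wk k s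
          + (1 / (2 * (Real.pi : ℂ))) * ∫ t : ℝ,
              Wk k (s - (σ : ℂ) - t * Complex.I) * riemannZeta ((σ : ℂ) + t * Complex.I)
                * Complex.Gamma ((σ : ℂ) + t * Complex.I)
                * Complex.Gamma (s + (k : ℂ) - (σ : ℂ) - t * Complex.I)
                / Complex.Gamma (s + (k : ℂ)))) := by
  refine ⟨fun s w => summable_norm_Zk, fun s σ hσ hσs => ?_⟩
  have : (0 : ℝ) ≤ k := k.cast_nonneg
  have hline (t : ℝ) := Wk_mul_zeta_mul_Gamma_eq (k := k) (s := s) (w := σ + t * I)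
    (by simpa using one_pos.trans hσ) (by simpa)
  have hσk : σ + k < (s + k).re := by simpa
  simp only [sub_add_eq_sub_sub] at hline
  have hint := verticalIntegrable_LSeries_mul_riemannZeta_mul_betaIntegral hσ (by linarith)
    (LSeriesSummable_maxNormPairs (k := k) (by rw [sub_re, ofReal_re]; linarith))
  have hsum := LSeriesHasSum_iff_hasSum_add_one.1
    (LSeriesHasSum_Sk_sq k hσ hσk)
  simp only [hline]
  refine ⟨by simpa only [VerticalIntegrable, sub_add_eq_sub_sub] using hint, ?_⟩
  rw [Wk_eq_LSeries (by linarith)]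
  push_cast at hsum
  simpa only [verticalIntegral, sub_add_eq_sub_sub] using hsum

/-- (a) absolute convergence of `Z_k(s,w)`; (b) decomposition of
`D(s, S_k × S_k)` in terms of `W_k`. -/
theorem DSkSk_decomposition (k : ℕ) (hk : 3 ≤ k) :
    (∀ s w : ℂ, 1 + (k : ℝ) / 2 < s.re → 0 ≤ w.re →
      Summable (fun p : ℕ × ℕ =>
        ‖(rk k (p.2 + (p.1 + 1)) : ℂ) * (rk k p.2 : ℂ) /
          (((p.2 : ℂ) + ((p.1 : ℂ) + 1)) ^ (s + (k : ℂ) / 2 - 1) * ((p.1 : ℂ) + 1) ^ w)‖)) ∧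
    (∀ s : ℂ, 2 < s.re → ∀ σ : ℝ, 1 < σ → σ < s.re - 1 →
      Integrable (fun t : ℝ =>
        Wk k (s - (σ : ℂ) - t * Complex.I) * riemannZeta ((σ : ℂ) + t * Complex.I)
          * Complex.Gamma ((σ : ℂ) + t * Complex.I)
          * Complex.Gamma (s + (k : ℂ) - (σ : ℂ) - t * Complex.I)
          / Complex.Gamma (s + (k : ℂ))) ∧
      (∑' n : ℕ, ((Sk k ((n : ℝ) + 1) : ℂ)) ^ 2 / ((n : ℂ) + 1) ^ (s + (k : ℂ)))
        = riemannZeta (s + (k : ℂ)) + Wk k s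
          + (1 / (2 * (Real.pi : ℂ))) * ∫ t : ℝ,
              Wk k (s - (σ : ℂ) - t * Complex.I) * riemannZeta ((σ : ℂ) + t * Complex.I)
                * Complex.Gamma ((σ : ℂ) + t * Complex.I)
                * Complex.Gamma (s + (k : ℂ) - (σ : ℂ) - t * Complex.I)
                / Complex.Gamma (s + (k : ℂ))) := by
  refine ⟨(DSkSk_decomposition_general k).1, fun s _ σ hσ hσs => ?_⟩
  obtain ⟨hint, hsum⟩ := (DSkSk_decomposition_general k).2 s σ hσ (by linarith)
  exact ⟨hint, hsum.tsum_eq⟩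
end

section
/- Let k ≥ 3 be an integer. For every ε > 0 there exists a constant A > 0 such that for all real X ≥ 2, |2 V_k ∫_0^∞ P_k(⌊t⌋)(⌊t⌋^{k/2} − t^{k/2}) e^{−t/X} dt + (π^{k/2} k Γ(k−1) V_k/(4 Γ(k/2))) X^{k−1}| ≤ A X^{k−2+ε}, where ⌊t⌋ denotes the greatest integer ≤ t. -/
open scoped Real

/- With `s = 1 / X`, theta modularity makes the Laplace transform of `Pk` vanish to infinite order
as `s → 0`, so `Pk` integrated against `t ^ b * exp (-s t)` is `O(1)`. On each unit cell the gap
`t ^ a - ⌊t⌋ ^ a`, `a = k / 2`, may be replaced by its mean `a / 2 * t ^ (a - 1)` plus lower-order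
terms, an Euler–Maclaurin expansion that costs only `O(X ^ (k - 2))` against `Pk k ⌊t⌋`. Finally
`Pk k ⌊t⌋ = Pk k t + Vk k * (t ^ a - ⌊t⌋ ^ a)`: against the mean of the gap, the first summand
contributes `O(1)`, and the second, averaged once more over the cells, yields the main term
`Vk k * (a / 2 * t ^ (a - 1)) ^ 2`. -/

section

open Set MeasureTheory Filter Topology

theorem abs_setIntegral_le_setIntegral {f g : ℝ → ℝ} {S : Set ℝ} (hS : MeasurableSet S)
    (hg : IntegrableOn g S) (h : ∀ t ∈ S, |f t| ≤ g t) : |∫ t in S, f t| ≤ ∫ t in S, g t :=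
  norm_integral_le_of_norm_le (f := f) hg (ae_restrict_of_forall_mem hS h)

theorem setIntegral_Ioc_add_Ioi {f : ℝ → ℝ} (hf : IntegrableOn f (Ioi 0)) :
    (∫ t in Ioc 0 1, f t) + ∫ t in Ioi 1, f t = ∫ t in Ioi 0, f t := by
  rw [← setIntegral_union Ioc_disjoint_Ioi_same measurableSet_Ioi
    (hf.mono_set Ioc_subset_Ioi_self) (hf.mono_set (Ioi_subset_Ioi zero_le_one)),
    Ioc_union_Ioi_eq_Ioi zero_le_one]

/-- The kernel `t ^ b * exp (-(s * t))` of the Gamma integral. -/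
noncomputable def powExp (s b t : ℝ) : ℝ := t ^ b * Real.exp (-(s * t))

theorem powExp_nonneg (s b : ℝ) {t : ℝ} (ht : 0 ≤ t) : 0 ≤ powExp s b t :=
  mul_nonneg (Real.rpow_nonneg ht b) (Real.exp_pos _).le

theorem rpow_mul_powExp (s b c : ℝ) {t : ℝ} (ht : 0 < t) :
    t ^ b * powExp s c t = powExp s (b + c) t := by
  rw [powExp, powExp, Real.rpow_add ht, mul_assoc]

@[fun_prop]
theorem measurable_powExp (s b : ℝ) : Measurable (powExp s b) := by
  unfold powExp
  fun_prop

theorem integrableOn_powExp_Ioi_zero {s b : ℝ} (hb : -1 < b) (hs : 0 < s) :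
    IntegrableOn (powExp s b) (Ioi 0) := by
  unfold powExp
  simpa using integrableOn_rpow_mul_exp_neg_mul_rpow hb one_pos hs

theorem integral_powExp_Ioi_zero {s b : ℝ} (hb : -1 < b) (hs : 0 < s) :
    ∫ t in Ioi 0, powExp s b t = Real.Gamma (b + 1) * s ^ (-(b + 1)) := by
  have := Real.integral_rpow_mul_exp_neg_mul_Ioi (a := b + 1) (by linarith) hs
  rw [add_sub_cancel_right] at this
  simp only [powExp]
  rw [this, mul_comm, one_div, Real.inv_rpow hs.le, Real.rpow_neg hs.le]

theorem powExp_le_powExp (s : ℝ) {b c t : ℝ} (hbc : b ≤ c) (ht : 1 ≤ t) :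
    powExp s b t ≤ powExp s c t :=
  mul_le_mul_of_nonneg_right (Real.rpow_le_rpow_of_exponent_le ht hbc) (Real.exp_pos _).le

theorem integrableOn_powExp_Ioi_one {s : ℝ} (b : ℝ) (hs : 0 < s) :
    IntegrableOn (powExp s b) (Ioi 1) := by
  have h : IntegrableOn (powExp s |b|) (Ioi 1) :=
    (integrableOn_powExp_Ioi_zero (by linarith [abs_nonneg b]) hs).mono_set
      (Ioi_subset_Ioi zero_le_one)
  refine Integrable.mono' h (by fun_prop) ?_
  refine (ae_restrict_mem measurableSet_Ioi).mono fun t (ht : 1 < t) => ?_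
  rw [Real.norm_of_nonneg (powExp_nonneg s b (by linarith))]
  exact powExp_le_powExp s (le_abs_self b) ht.le

theorem pow_mul_exp_neg_le_factorial (j : ℕ) {x : ℝ} (hx : 0 ≤ x) :
    x ^ j * Real.exp (-x) ≤ j.factorial := by
  rw [Real.exp_neg, ← div_eq_mul_inv, div_le_iff₀' (Real.exp_pos x),
    ← div_le_iff₀ (by positivity)]
  exact Real.pow_div_factorial_le_exp x hx j

theorem pow_mul_powExp_le (j : ℕ) {s : ℝ} (b : ℝ) {t : ℝ} (hs : 0 ≤ s) (ht : 0 ≤ t) :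
    (s * t) ^ j * powExp s b t ≤ 2 ^ j * j.factorial * powExp (s / 2) b t := by
  have h : (s * t) ^ j * powExp s b t =
      2 ^ j * ((s / 2 * t) ^ j * Real.exp (-(s / 2 * t))) * powExp (s / 2) b t := by
    have he : Real.exp (-(s * t)) = Real.exp (-(s / 2 * t)) * Real.exp (-(s / 2 * t)) := by
      rw [← Real.exp_add]
      ring_nf
    rw [powExp, powExp, he, show s * t = 2 * (s / 2 * t) by ring, mul_pow]
    ring
  rw [h]
  have := powExp_nonneg (s / 2) b ht
  gcongr
  exact pow_mul_exp_neg_le_factorial j (by positivity)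

/-! ### Laplace transforms flat at the origin -/

/-- Functions on the half-line whose Laplace transform converges absolutely on the right
half-plane. -/
def LaplaceIntegrable (p : ℝ → ℝ) : Prop :=
  ∀ s : ℝ, 0 < s → IntegrableOn (fun t => p t * Real.exp (-(s * t))) (Ioi 0)

/-- The Laplace transform of `p`, as a function of a complex variable. -/
noncomputable def laplace (p : ℝ → ℝ) (z : ℂ) : ℂ :=
  ∫ t in Ioi (0 : ℝ), (p t : ℂ) * Complex.exp (-(z * t))

theorem norm_laplace_integrand (p : ℝ → ℝ) (z : ℂ) (t : ℝ) :
    ‖(p t : ℂ) * Complex.exp (-(z * t))‖ = ‖p t * Real.exp (-(z.re * t))‖ := by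
  simp [Complex.norm_exp]

theorem LaplaceIntegrable.aestronglyMeasurable {p : ℝ → ℝ} (hp : LaplaceIntegrable p) :
    AEStronglyMeasurable p (volume.restrict (Ioi 0)) := by
  have h : AEStronglyMeasurable (fun t => p t * Real.exp (-(1 * t)) * Real.exp t)
      (volume.restrict (Ioi 0)) :=
    (hp 1 one_pos).aestronglyMeasurable.mul Real.continuous_exp.aestronglyMeasurable
  refine h.congr (Eventually.of_forall fun t => ?_)
  simp only
  rw [mul_assoc, ← Real.exp_add, one_mul, neg_add_cancel, Real.exp_zero, mul_one]

theorem LaplaceIntegrable.aestronglyMeasurable_integrand {p : ℝ → ℝ} (hp : LaplaceIntegrable p)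
    (z : ℂ) : AEStronglyMeasurable (fun t : ℝ => (p t : ℂ) * Complex.exp (-(z * t)))
      (volume.restrict (Ioi 0)) :=
  (Complex.continuous_ofReal.comp_aestronglyMeasurable hp.aestronglyMeasurable).mul
    (by fun_prop : Continuous fun t : ℝ => Complex.exp (-(z * t))).aestronglyMeasurable

theorem LaplaceIntegrable.integrableOn_complex {p : ℝ → ℝ} (hp : LaplaceIntegrable p) {z : ℂ}
    (hz : 0 < z.re) :
    IntegrableOn (fun t : ℝ => (p t : ℂ) * Complex.exp (-(z * t))) (Ioi 0) :=
  (hp z.re hz).norm.mono' (hp.aestronglyMeasurable_integrand z)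
    (Eventually.of_forall fun t => (norm_laplace_integrand p z t).le)

theorem LaplaceIntegrable.pow_mul {p : ℝ → ℝ} (hp : LaplaceIntegrable p) (j : ℕ) :
    LaplaceIntegrable fun t => t ^ j * p t := by
  intro s hs
  refine ((hp (s / 2) (half_pos hs)).norm.const_mul ((2 / s) ^ j * j.factorial)).mono' ?_ ?_
  · exact ((continuous_pow j).aestronglyMeasurable.mul hp.aestronglyMeasurable).mul
      (by fun_prop : Continuous fun t : ℝ => Real.exp (-(s * t))).aestronglyMeasurable
  · refine (ae_restrict_mem measurableSet_Ioi).mono fun t (ht : 0 < t) => ?_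
    have h : (s * t) ^ j * Real.exp (-(s * t)) ≤
        2 ^ j * j.factorial * Real.exp (-(s / 2 * t)) := by
      simpa [powExp] using pow_mul_powExp_le j 0 hs.le ht.le
    simp only [norm_mul, Real.norm_eq_abs, Real.abs_exp, abs_pow, abs_of_pos ht]
    calc t ^ j * |p t| * Real.exp (-(s * t))
        = |p t| / s ^ j * ((s * t) ^ j * Real.exp (-(s * t))) := by
          rw [mul_pow]
          field_simp
      _ ≤ |p t| / s ^ j * (2 ^ j * j.factorial * Real.exp (-(s / 2 * t))) := by gcongr
      _ = (2 / s) ^ j * j.factorial * (|p t| * Real.exp (-(s / 2 * t))) := by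
        rw [div_pow]
        ring

theorem hasDerivAt_laplace {p : ℝ → ℝ} (hp : LaplaceIntegrable p) {z : ℂ} (hz : 0 < z.re) :
    HasDerivAt (laplace p) (-laplace (fun t => t * p t) z) z := by
  have hp' : LaplaceIntegrable fun t => t * p t := by simpa using hp.pow_mul 1
  have h := (hasDerivAt_integral_of_dominated_loc_of_deriv_le
    (F := fun z t => (p t : ℂ) * Complex.exp (-(z * t)))
    (F' := fun z t => -(((t * p t : ℝ) : ℂ) * Complex.exp (-(z * t))))
    (bound := fun t => ‖t * p t * Real.exp (-(z.re / 2 * t))‖)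
    (Metric.ball_mem_nhds z (half_pos hz))
    (Eventually.of_forall fun w => hp.aestronglyMeasurable_integrand w)
    (hp.integrableOn_complex hz) (hp'.aestronglyMeasurable_integrand z).neg ?_
    (hp' _ (half_pos hz)).norm ?_).2
  · rwa [integral_neg] at h
  · refine (ae_restrict_mem measurableSet_Ioi).mono fun t (ht : 0 < t) w hw => ?_
    have hw' : z.re / 2 ≤ w.re := by
      have := (Complex.abs_re_le_norm (w - z)).trans_lt (mem_ball_iff_norm.1 hw)
      rw [Complex.sub_re, abs_lt] at this
      linarith
    rw [norm_neg, norm_laplace_integrand (fun t => t * p t), norm_mul, norm_mul _ (Real.exp _),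
      Real.norm_of_nonneg (Real.exp_pos _).le, Real.norm_of_nonneg (Real.exp_pos _).le]
    gcongr
  · refine Eventually.of_forall fun t w _ => ?_
    have h : HasDerivAt (fun w : ℂ => Complex.exp (-(w * t)))
        (Complex.exp (-(w * t)) * -(1 * (t : ℂ))) w :=
      ((hasDerivAt_id w).mul_const (t : ℂ)).neg.cexp
    refine (h.const_mul (p t : ℂ)).congr_deriv ?_
    push_cast
    ring

theorem iteratedDeriv_laplace {p : ℝ → ℝ} (hp : LaplaceIntegrable p) (j : ℕ) {z : ℂ}
    (hz : 0 < z.re) :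
    iteratedDeriv j (laplace p) z = (-1) ^ j * laplace (fun t => t ^ j * p t) z := by
  induction j generalizing z with
  | zero => simp
  | succ j ih =>
    have h : iteratedDeriv j (laplace p) =ᶠ[𝓝 z]
        fun w => (-1) ^ j * laplace (fun t => t ^ j * p t) w := by
      filter_upwards [(isOpen_lt continuous_const Complex.continuous_re).mem_nhds hz] with w hw
        using ih hw
    rw [iteratedDeriv_succ, h.deriv_eq, ((hasDerivAt_laplace (hp.pow_mul j) hz).const_mul _).deriv]
    simp only [← mul_assoc, ← pow_succ']
    ring

theorem analyticOnNhd_laplace {p : ℝ → ℝ} (hp : LaplaceIntegrable p) :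
    AnalyticOnNhd ℂ (laplace p) {z : ℂ | 0 < z.re} :=
  DifferentiableOn.analyticOnNhd
    (fun _ hz => (hasDerivAt_laplace hp hz).differentiableAt.differentiableWithinAt)
    (isOpen_lt continuous_const Complex.continuous_re)

theorem laplace_ofReal (p : ℝ → ℝ) (s : ℝ) :
    laplace p s = ((∫ t in Ioi 0, p t * Real.exp (-(s * t)) : ℝ) : ℂ) := by
  rw [← integral_complex_ofReal, laplace]
  congr 1 with t
  push_cast
  rfl

/-- The Laplace transform vanishes to infinite order at the origin inside the sector
`‖z‖ ≤ 3 * z.re`, which contains the ball of radius `w / 2` around each `w > 0`. -/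
def LaplaceFlat (p : ℝ → ℝ) : Prop :=
  ∀ N : ℕ, ∃ C : ℝ, ∀ z : ℂ, 0 < z.re → ‖z‖ ≤ 3 * z.re → ‖z‖ ≤ 1 → ‖laplace p z‖ ≤ C * ‖z‖ ^ N

theorem LaplaceFlat.exists_norm_laplace_pow_mul_le {p : ℝ → ℝ} (hp : LaplaceIntegrable p)
    (hflat : LaplaceFlat p) (j : ℕ) :
    ∃ C : ℝ, ∀ w : ℝ, 0 < w → w ≤ 1 / 2 → ‖laplace (fun t => t ^ j * p t) w‖ ≤ C := by
  obtain ⟨C, hC⟩ := hflat j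
  refine ⟨j.factorial * (|C| * 3 ^ j), fun w hw hw1 => ?_⟩
  have hball : ∀ z ∈ Metric.closedBall (w : ℂ) (w / 2), w / 2 ≤ z.re ∧ ‖z‖ ≤ 3 / 2 * w := by
    intro z hz
    rw [mem_closedBall_iff_norm] at hz
    have hre := (Complex.abs_re_le_norm _).trans hz
    rw [Complex.sub_re, Complex.ofReal_re, abs_le] at hre
    have hnorm := norm_le_insert' z (w : ℂ)
    rw [Complex.norm_real, Real.norm_of_nonneg hw.le] at hnorm
    constructor <;> linarith
  have hd : DiffContOnCl ℂ (laplace p) (Metric.ball (w : ℂ) (w / 2)) := by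
    apply DifferentiableOn.diffContOnCl
    rw [closure_ball _ (by positivity)]
    exact fun z hz => (hasDerivAt_laplace hp
      (by linarith [(hball z hz).1])).differentiableAt.differentiableWithinAt
  have hsphere : ∀ z ∈ Metric.sphere (w : ℂ) (w / 2), ‖laplace p z‖ ≤ |C| * (3 / 2 * w) ^ j := by
    intro z hz
    obtain ⟨hre, hnorm⟩ := hball z (Metric.sphere_subset_closedBall hz)
    calc ‖laplace p z‖ ≤ C * ‖z‖ ^ j := hC z (by linarith) (by linarith) (by linarith)
      _ ≤ |C| * (3 / 2 * w) ^ j := by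
        gcongr
        exact le_abs_self C
  have h := Complex.norm_iteratedDeriv_le_of_forall_mem_sphere_norm_le j (half_pos hw) hd hsphere
  rw [iteratedDeriv_laplace hp j (by simpa using hw), norm_mul, norm_pow, norm_neg, norm_one,
    one_pow, one_mul] at h
  convert h using 1
  rw [show 3 / 2 * w = 3 * (w / 2) by ring, mul_pow]
  field_simp

theorem abs_mul_exp_le_abs_mul_exp_mul_exp (x : ℝ) {u v d : ℝ} (h : u ≤ v + d) :
    |x * Real.exp u| ≤ |x * Real.exp v| * Real.exp d := by
  rw [abs_mul, abs_mul, Real.abs_exp, Real.abs_exp, mul_assoc, ← Real.exp_add]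
  gcongr

theorem LaplaceIntegrable.exists_abs_setIntegral_le_of_small {q : ℝ → ℝ} (hq : LaplaceIntegrable q)
    {C : ℝ} (hC : ∀ w : ℝ, 0 < w → w ≤ 1 / 2 → ‖laplace q w‖ ≤ C) :
    ∃ D : ℝ, ∀ w : ℝ, 0 < w → w ≤ 1 / 2 → |∫ t in Ioi 1, q t * Real.exp (-(w * t))| ≤ D := by
  refine ⟨C + ∫ t in Ioc 0 1, |q t * Real.exp (-(1 * t))| * Real.exp 1, fun w hw hw1 => ?_⟩
  have hnear : |∫ t in Ioc 0 1, q t * Real.exp (-(w * t))| ≤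
      ∫ t in Ioc 0 1, |q t * Real.exp (-(1 * t))| * Real.exp 1 := by
    refine abs_setIntegral_le_setIntegral measurableSet_Ioc
      (((hq 1 one_pos).mono_set Ioc_subset_Ioi_self).abs.mul_const _) fun t ht => ?_
    exact abs_mul_exp_le_abs_mul_exp_mul_exp _ (by nlinarith [ht.1, ht.2])
  have hall := hC w hw hw1
  rw [laplace_ofReal, Complex.norm_real, Real.norm_eq_abs,
    ← setIntegral_Ioc_add_Ioi (hq w hw)] at hall
  rw [abs_le] at *
  constructor <;> linarith

theorem LaplaceIntegrable.exists_abs_setIntegral_le_of_large {q : ℝ → ℝ}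
    (hq : LaplaceIntegrable q) :
    ∃ D : ℝ, ∀ w : ℝ, 1 / 2 ≤ w →
      |∫ t in Ioi 1, q t * Real.exp (-(w * t))| ≤ D * Real.exp (-(w / 2)) := by
  refine ⟨∫ t in Ioi 1, |q t * Real.exp (-(1 / 4 * t))|, fun w hw => ?_⟩
  rw [← integral_mul_const]
  refine abs_setIntegral_le_setIntegral measurableSet_Ioi (((hq (1 / 4) (by norm_num)).mono_set
    (Ioi_subset_Ioi zero_le_one)).abs.mul_const _) fun t (ht : 1 < t) => ?_
  exact abs_mul_exp_le_abs_mul_exp_mul_exp _ (by nlinarith)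

theorem LaplaceIntegrable.exists_abs_setIntegral_le {q : ℝ → ℝ} (hq : LaplaceIntegrable q)
    {C : ℝ} (hC : ∀ w : ℝ, 0 < w → w ≤ 1 / 2 → ‖laplace q w‖ ≤ C) :
    ∃ D : ℝ, ∀ w : ℝ, 0 < w →
      |∫ t in Ioi 1, q t * Real.exp (-(w * t))| ≤ D * Real.exp (-(w / 2)) := by
  obtain ⟨D₁, hD₁⟩ := hq.exists_abs_setIntegral_le_of_small hC
  obtain ⟨D₂, hD₂⟩ := hq.exists_abs_setIntegral_le_of_large
  refine ⟨max (|D₁| * Real.exp (1 / 4)) D₂, fun w hw => ?_⟩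
  rcases le_total w (1 / 2) with hw1 | hw1
  · calc |∫ t in Ioi 1, q t * Real.exp (-(w * t))| ≤ |D₁| := (hD₁ w hw hw1).trans (le_abs_self _)
      _ ≤ |D₁| * (Real.exp (1 / 4) * Real.exp (-(w / 2))) := by
        refine le_mul_of_one_le_right (abs_nonneg _) ?_
        rw [← Real.exp_add]
        exact Real.one_le_exp (by linarith)
      _ ≤ _ := by
        rw [← mul_assoc]
        gcongr
        exact le_max_left _ _
  · refine (hD₂ w hw1).trans ?_
    gcongr
    exact le_max_right _ _

theorem integral_powExp_sub_one {c t : ℝ} (hc : 0 < c) (ht : 0 < t) :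
    ∫ w in Ioi 0, powExp t (c - 1) w = Real.Gamma c * t ^ (-c) := by
  rw [integral_powExp_Ioi_zero (by linarith) ht, sub_add_cancel]

theorem LaplaceIntegrable.integrable_prod_powExp {q : ℝ → ℝ} (hq : LaplaceIntegrable q)
    {c s : ℝ} (hc : 0 < c) (hs : 0 < s) :
    Integrable (Function.uncurry fun t w => q t * Real.exp (-(s * t)) * powExp t (c - 1) w)
      ((volume.restrict (Ioi 1)).prod (volume.restrict (Ioi 0))) := by
  have hq1 : IntegrableOn (fun t => q t * Real.exp (-(s * t))) (Ioi 1) :=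
    (hq s hs).mono_set (Ioi_subset_Ioi zero_le_one)
  have hmeas : AEStronglyMeasurable
      (Function.uncurry fun t w => q t * Real.exp (-(s * t)) * powExp t (c - 1) w)
      ((volume.restrict (Ioi 1)).prod (volume.restrict (Ioi 0))) := by
    refine hq1.aestronglyMeasurable.comp_fst.mul (Measurable.aestronglyMeasurable ?_)
    unfold powExp
    fun_prop
  refine (integrable_prod_iff hmeas).2 ⟨?_, ?_⟩
  · refine ae_restrict_of_forall_mem measurableSet_Ioi fun t (ht : 1 < t) => ?_
    exact (integrableOn_powExp_Ioi_zero (s := t) (b := c - 1) (by linarith)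
      (by linarith)).const_mul (q t * Real.exp (-(s * t)))
  · refine (hq1.abs.const_mul (Real.Gamma c)).mono' hmeas.norm.integral_prod_right' ?_
    refine ae_restrict_of_forall_mem measurableSet_Ioi fun t (ht : 1 < t) => ?_
    have hinner : ∫ w in Ioi 0, ‖q t * Real.exp (-(s * t)) * powExp t (c - 1) w‖ =
        |q t * Real.exp (-(s * t))| * (Real.Gamma c * t ^ (-c)) := by
      rw [← integral_powExp_sub_one hc (by linarith), ← integral_const_mul]
      refine setIntegral_congr_fun measurableSet_Ioi fun w (hw : 0 < w) => ?_
      simp only [norm_mul _ (powExp t (c - 1) w), Real.norm_eq_abs,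
        abs_of_nonneg (powExp_nonneg t (c - 1) hw.le)]
    simp only [Function.uncurry_apply_pair]
    have hG := Real.Gamma_pos_of_pos hc
    rw [hinner, Real.norm_of_nonneg (by positivity), mul_comm (Real.Gamma c) |_|]
    gcongr
    have hpow : t ^ (-c) ≤ 1 := Real.rpow_le_one_of_one_le_of_nonpos ht.le (by linarith)
    exact mul_le_of_le_one_right hG.le hpow

/- Fractional powers are reached through `Γ(c) * t ^ (-c) = ∫ w ^ (c - 1) * exp (-t * w)`, which
shifts the Laplace variable from `s` to `s + w`. -/
theorem LaplaceIntegrable.exists_abs_setIntegral_rpow_neg_le {q : ℝ → ℝ} (hq : LaplaceIntegrable q)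
    {D : ℝ} (hD : ∀ w : ℝ, 0 < w →
      |∫ t in Ioi 1, q t * Real.exp (-(w * t))| ≤ D * Real.exp (-(w / 2)))
    {c : ℝ} (hc : 0 < c) :
    ∃ C : ℝ, ∀ s : ℝ, 0 < s → |∫ t in Ioi 1, q t * powExp s (-c) t| ≤ C := by
  have hG := Real.Gamma_pos_of_pos hc
  have hD0 : 0 ≤ D := nonneg_of_mul_nonneg_left ((abs_nonneg _).trans (hD 1 one_pos))
    (Real.exp_pos _)
  refine ⟨(Real.Gamma c)⁻¹ * ∫ w in Ioi 0, D * powExp (1 / 2) (c - 1) w, fun s hs => ?_⟩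
  have hswap : ∫ t in Ioi 1, q t * powExp s (-c) t = (Real.Gamma c)⁻¹ *
      ∫ w in Ioi 0, ∫ t in Ioi 1, q t * Real.exp (-(s * t)) * powExp t (c - 1) w := by
    rw [← integral_integral_swap (hq.integrable_prod_powExp hc hs), ← integral_const_mul]
    refine setIntegral_congr_fun measurableSet_Ioi fun t (ht : 1 < t) => ?_
    simp only [integral_const_mul, integral_powExp_sub_one hc (zero_lt_one.trans ht)]
    rw [powExp]
    field_simp
  rw [hswap, abs_mul, abs_of_pos (inv_pos.2 hG)]
  gcongr
  refine abs_setIntegral_le_setIntegral measurableSet_Ioi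
    ((integrableOn_powExp_Ioi_zero (by linarith) (by norm_num)).const_mul D)
    fun w (hw : 0 < w) => ?_
  have hshift : ∫ t in Ioi 1, q t * Real.exp (-(s * t)) * powExp t (c - 1) w =
      w ^ (c - 1) * ∫ t in Ioi 1, q t * Real.exp (-((s + w) * t)) := by
    rw [← integral_const_mul]
    congr 1 with t
    rw [powExp, show -((s + w) * t) = -(s * t) + -(t * w) by ring, Real.exp_add]
    ring
  rw [hshift, abs_mul, abs_of_nonneg (Real.rpow_nonneg hw.le _), powExp, mul_left_comm]
  gcongr
  refine (hD (s + w) (by linarith)).trans ?_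
  gcongr
  linarith

theorem LaplaceFlat.exists_abs_setIntegral_mul_powExp_le {p : ℝ → ℝ} (hp : LaplaceIntegrable p)
    (hflat : LaplaceFlat p) (b : ℝ) :
    ∃ C : ℝ, ∀ s : ℝ, 0 < s → |∫ t in Ioi 1, p t * powExp s b t| ≤ C := by
  obtain ⟨j, hj⟩ := exists_nat_gt b
  obtain ⟨C, hC⟩ := hflat.exists_norm_laplace_pow_mul_le hp j
  obtain ⟨D, hD⟩ := (hp.pow_mul j).exists_abs_setIntegral_le hC
  obtain ⟨C', hC'⟩ := (hp.pow_mul j).exists_abs_setIntegral_rpow_neg_le hD (sub_pos.2 hj)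
  refine ⟨C', fun s hs => (hC' s hs).trans_eq' ?_⟩
  congr 1
  refine setIntegral_congr_fun measurableSet_Ioi fun t (ht : 1 < t) => ?_
  have hb := rpow_mul_powExp s j (-(j - b)) (zero_lt_one.trans ht)
  rw [Real.rpow_natCast, show (j : ℝ) + -(j - b) = b by ring] at hb
  simp only [← hb]
  ring

/-! ### The discrepancy and its Laplace transform -/

theorem Sk_floor (k : ℕ) (t : ℝ) : Sk k ⌊t⌋ = Sk k t := by
  unfold Sk
  have h (v : Fin k → ℤ) : ∑ i, (v i : ℝ) ^ 2 ≤ (⌊t⌋ : ℝ) ↔ ∑ i, (v i : ℝ) ^ 2 ≤ t := by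
    rw [show ∑ i, (v i : ℝ) ^ 2 = ((∑ i, v i ^ 2 : ℤ) : ℝ) by push_cast; rfl, Int.cast_le,
      Int.le_floor]
  simp_rw [h]

theorem Pk_floor (k : ℕ) (t : ℝ) :
    Pk k ⌊t⌋ = Pk k t + Vk k * (t ^ ((k : ℝ) / 2) - (⌊t⌋ : ℝ) ^ ((k : ℝ) / 2)) := by
  unfold Pk
  rw [Sk_floor]
  ring

theorem setOf_sum_sq_le_subset_piFinset (k : ℕ) (t : ℝ) :
    {v : Fin k → ℤ | ∑ i, (v i : ℝ) ^ 2 ≤ t} ⊆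
      Fintype.piFinset fun _ : Fin k => Finset.Icc (-(⌊√t⌋₊ : ℤ)) ⌊√t⌋₊ := by
  intro v hv
  simp only [mem_ofPred_eq] at hv
  simp only [Finset.mem_coe, Fintype.mem_piFinset, Finset.mem_Icc]
  intro i
  have hi : (v i : ℝ) ^ 2 ≤ t :=
    (Finset.single_le_sum (f := fun i => (v i : ℝ) ^ 2) (fun _ _ => sq_nonneg _)
      (Finset.mem_univ i)).trans hv
  have hfloor : (v i).natAbs ≤ ⌊√t⌋₊ :=
    Nat.le_floor (by rw [Nat.cast_natAbs, Int.cast_abs]; exact Real.abs_le_sqrt hi)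
  omega

theorem finite_setOf_sum_sq_le (k : ℕ) (t : ℝ) :
    {v : Fin k → ℤ | ∑ i, (v i : ℝ) ^ 2 ≤ t}.Finite :=
  (Finset.finite_toSet _).subset (setOf_sum_sq_le_subset_piFinset k t)

theorem Sk_eq_ncard (k : ℕ) (t : ℝ) :
    Sk k t = {v : Fin k → ℤ | ∑ i, (v i : ℝ) ^ 2 ≤ t}.ncard := by
  rw [Sk, ← Set.coe_ofPred, Nat.card_coe_set_eq]

theorem Sk_mono (k : ℕ) : Monotone (Sk k) := by
  intro s t hst
  rw [Sk_eq_ncard, Sk_eq_ncard]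
  exact ncard_le_ncard (fun v hv => le_trans hv hst) (finite_setOf_sum_sq_le k t)

theorem Sk_le (k : ℕ) (t : ℝ) : (Sk k t : ℝ) ≤ (2 * √t + 1) ^ k := by
  have hcard : Sk k t ≤ (2 * ⌊√t⌋₊ + 1) ^ k := by
    rw [Sk_eq_ncard]
    refine (ncard_le_ncard (setOf_sum_sq_le_subset_piFinset k t)
      (Finset.finite_toSet _)).trans_eq ?_
    rw [ncard_coe_finset, Fintype.card_piFinset, Finset.prod_const, Finset.card_univ,
      Fintype.card_fin, Int.card_Icc]
    congr 1
    omega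
  calc (Sk k t : ℝ) ≤ (2 * ⌊√t⌋₊ + 1) ^ k := by exact_mod_cast hcard
    _ ≤ (2 * √t + 1) ^ k := by
      gcongr
      exact Nat.floor_le (Real.sqrt_nonneg t)

theorem Sk_le_mul_one_add_rpow (k : ℕ) {t : ℝ} (ht : 0 ≤ t) :
    (Sk k t : ℝ) ≤ 3 ^ k * (1 + t ^ ((k : ℝ) / 2)) := by
  have hpow : √t ^ k = t ^ ((k : ℝ) / 2) := by
    rw [Real.sqrt_eq_rpow, ← Real.rpow_natCast, ← Real.rpow_mul ht]
    congr 1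
    ring
  refine (Sk_le k t).trans ?_
  rcases le_total (√t) 1 with h | h
  · calc (2 * √t + 1) ^ k ≤ 3 ^ k := by gcongr; linarith
      _ ≤ 3 ^ k * (1 + t ^ ((k : ℝ) / 2)) :=
        le_mul_of_one_le_right (by positivity) (le_add_of_nonneg_right (by positivity))
  · calc (2 * √t + 1) ^ k ≤ (3 * √t) ^ k := by gcongr; linarith
      _ = 3 ^ k * t ^ ((k : ℝ) / 2) := by rw [mul_pow, hpow]
      _ ≤ 3 ^ k * (1 + t ^ ((k : ℝ) / 2)) := by gcongr; linarith

theorem Vk_pos (k : ℕ) : 0 < Vk k := by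
  have := Real.Gamma_pos_of_pos (show (0 : ℝ) < (k : ℝ) / 2 + 1 by positivity)
  unfold Vk
  positivity

theorem exists_abs_Pk_le (k : ℕ) :
    ∃ C : ℝ, 0 < C ∧ ∀ t : ℝ, 0 ≤ t → |Pk k t| ≤ C * (1 + t ^ ((k : ℝ) / 2)) := by
  have hV := Vk_pos k
  refine ⟨3 ^ k + Vk k, by positivity, fun t ht => ?_⟩
  calc |Pk k t| ≤ |(Sk k t : ℝ)| + |Vk k * t ^ ((k : ℝ) / 2)| := abs_sub _ _
    _ = Sk k t + Vk k * t ^ ((k : ℝ) / 2) := by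
      rw [abs_of_nonneg (by positivity), abs_of_nonneg (by positivity)]
    _ ≤ 3 ^ k * (1 + t ^ ((k : ℝ) / 2)) + Vk k * (1 + t ^ ((k : ℝ) / 2)) := by
      gcongr
      · exact Sk_le_mul_one_add_rpow k ht
      · linarith
    _ = (3 ^ k + Vk k) * (1 + t ^ ((k : ℝ) / 2)) := by ring

@[fun_prop]
theorem measurable_Pk (k : ℕ) : Measurable (Pk k) :=
  (measurable_from_top.comp (Sk_mono k).measurable).sub (by fun_prop)

theorem laplaceIntegrable_Pk (k : ℕ) : LaplaceIntegrable (Pk k) := by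
  intro s hs
  obtain ⟨C, -, hC⟩ := exists_abs_Pk_le k
  have : (0 : ℝ) ≤ k := k.cast_nonneg
  refine (((integrableOn_powExp_Ioi_zero (b := 0) (by norm_num) hs).add
    (integrableOn_powExp_Ioi_zero (b := (k : ℝ) / 2) (by linarith) hs)).const_mul C).mono'
    (by fun_prop) (ae_restrict_of_forall_mem measurableSet_Ioi fun t (ht : 0 < t) => ?_)
  rw [norm_mul, Real.norm_eq_abs, Real.norm_of_nonneg (Real.exp_pos _).le]
  calc |Pk k t| * Real.exp (-(s * t)) ≤ C * (1 + t ^ ((k : ℝ) / 2)) * Real.exp (-(s * t)) := by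
        gcongr
        exact hC t ht.le
    _ = C * (powExp s 0 t + powExp s ((k : ℝ) / 2) t) := by
      rw [powExp, powExp, Real.rpow_zero]
      ring

theorem laplaceIntegrable_rpow {b : ℝ} (hb : -1 < b) : LaplaceIntegrable (· ^ b) :=
  fun _ hs => integrableOn_powExp_Ioi_zero hb hs

theorem summable_norm_prod_and_hasSum_prod_fin {ι R : Type*} [NormedCommRing R] [CompleteSpace R]
    {f : ι → R} (hf : Summable fun i => ‖f i‖) (k : ℕ) :
    (Summable fun v : Fin k → ι => ‖∏ i, f (v i)‖) ∧
      HasSum (fun v : Fin k → ι => ∏ i, f (v i)) ((∑' i, f i) ^ k) := by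
  induction k with
  | zero => exact ⟨.of_finite, by simp [hasSum_unique]⟩
  | succ k ih =>
    have hprod (x : ι × (Fin k → ι)) :
        ∏ i, f (Fin.consEquiv (fun _ : Fin (k + 1) => ι) x i) = f x.1 * ∏ i, f (x.2 i) := by
      simp [Fin.consEquiv, Fin.prod_univ_succ]
    constructor
    · rw [← (Fin.consEquiv fun _ : Fin (k + 1) => ι).summable_iff]
      simpa only [Function.comp_def, hprod] using hf.mul_norm ih.1
    · rw [← (Fin.consEquiv fun _ : Fin (k + 1) => ι).hasSum_iff, pow_succ']
      simp only [Function.comp_def, hprod]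
      rw [← ih.2.tsum_eq, tsum_mul_tsum_of_summable_norm hf ih.1]
      exact (summable_mul_of_summable_norm hf ih.1).hasSum

theorem summable_norm_exp_neg_mul_sq {z : ℂ} (hz : 0 < z.re) :
    Summable fun n : ℤ => ‖Complex.exp (-(z * (n : ℂ) ^ 2))‖ := by
  have him : 0 < (Complex.I * z / π).im := by
    rw [Complex.div_ofReal_im, Complex.I_mul_im]
    positivity
  refine ((hasSum_jacobiTheta₂_term 0 him).summable.norm).congr fun n => ?_
  rw [jacobiTheta₂_term]
  congr 2
  have hpi : (π : ℂ) ≠ 0 := by exact_mod_cast Real.pi_ne_zero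
  field_simp
  linear_combination (z * n ^ 2) * Complex.I_sq

theorem Sk_eq_tsum_indicator (k : ℕ) (t : ℝ) :
    (Sk k t : ℂ) =
      ∑' v : Fin k → ℤ, (Ici (∑ i, (v i : ℝ) ^ 2)).indicator (fun _ => (1 : ℂ)) t := by
  have h := tsum_subtype {v : Fin k → ℤ | ∑ i, (v i : ℝ) ^ 2 ≤ t} (fun _ => (1 : ℂ))
  rw [tsum_const, nsmul_eq_mul, mul_one] at h
  unfold Sk
  rw [← Set.coe_ofPred, h]
  rfl

theorem indicator_Ici_mul_exp (a : ℝ) (z : ℂ) (t : ℝ) :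
    (Ici a).indicator (fun _ => (1 : ℂ)) t * Complex.exp (-(z * t)) =
      (Ici a).indicator (fun t : ℝ => Complex.exp (-z * t)) t := by
  by_cases h : t ∈ Ici a <;> simp [h]

theorem integrableOn_indicator_Ici_mul_exp (a : ℝ) {z : ℂ} (hz : 0 < z.re) :
    IntegrableOn (fun t : ℝ => (Ici a).indicator (fun _ => (1 : ℂ)) t * Complex.exp (-(z * t)))
      (Ioi 0) := by
  simp_rw [indicator_Ici_mul_exp]
  refine ((integrable_indicator_iff measurableSet_Ici).2 ?_).integrableOn
  rw [integrableOn_Ici_iff_integrableOn_Ioi]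
  exact integrableOn_exp_mul_complex_Ioi (by simpa using hz) a

theorem integral_indicator_Ici_mul_exp {a : ℝ} (ha : 0 ≤ a) {z : ℂ} (hz : 0 < z.re) :
    ∫ t in Ioi (0 : ℝ), (Ici a).indicator (fun _ => (1 : ℂ)) t * Complex.exp (-(z * t)) =
      Complex.exp (-(z * a)) / z := by
  simp_rw [indicator_Ici_mul_exp]
  rw [← integral_Ici_eq_integral_Ioi, setIntegral_indicator measurableSet_Ici,
    inter_eq_right.2 (Ici_subset_Ici.2 ha), integral_Ici_eq_integral_Ioi,
    integral_exp_mul_complex_Ioi (by simpa using hz), neg_div_neg_eq, neg_mul]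

theorem integral_norm_indicator_Ici_mul_exp {a : ℝ} (ha : 0 ≤ a) {z : ℂ} (hz : 0 < z.re) :
    ∫ t in Ioi (0 : ℝ), ‖(Ici a).indicator (fun _ => (1 : ℂ)) t * Complex.exp (-(z * t))‖ =
      ‖Complex.exp (-(z * a))‖ / z.re := by
  simp_rw [indicator_Ici_mul_exp, norm_indicator_eq_indicator_norm, Complex.norm_exp]
  rw [← integral_Ici_eq_integral_Ioi, setIntegral_indicator measurableSet_Ici,
    inter_eq_right.2 (Ici_subset_Ici.2 ha), integral_Ici_eq_integral_Ioi]
  simp only [Complex.re_mul_ofReal, Complex.neg_re]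
  rw [integral_exp_mul_Ioi (by simpa using hz), neg_div_neg_eq, neg_mul]

theorem laplace_Sk (k : ℕ) {z : ℂ} (hz : 0 < z.re) :
    laplace (fun t => Sk k t) z = (∑' n : ℤ, Complex.exp (-(z * (n : ℂ) ^ 2))) ^ k / z := by
  have hexp (v : Fin k → ℤ) : Complex.exp (-(z * ((∑ i, (v i : ℝ) ^ 2 : ℝ) : ℂ))) =
      ∏ i, Complex.exp (-(z * (v i : ℂ) ^ 2)) := by
    rw [← Complex.exp_sum, Finset.sum_neg_distrib, ← Finset.mul_sum]
    push_cast
    rfl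
  have ha (v : Fin k → ℤ) : 0 ≤ ∑ i, (v i : ℝ) ^ 2 := Finset.sum_nonneg fun i _ => sq_nonneg _
  obtain ⟨hnorm, hsum⟩ :=
    summable_norm_prod_and_hasSum_prod_fin (summable_norm_exp_neg_mul_sq hz) k
  have h := hasSum_integral_of_summable_integral_norm
    (fun v : Fin k → ℤ => integrableOn_indicator_Ici_mul_exp (∑ i, (v i : ℝ) ^ 2) hz)
    (by simpa only [integral_norm_indicator_Ici_mul_exp (ha _) hz, hexp] using hnorm.div_const _)
  simp only [integral_indicator_Ici_mul_exp (ha _) hz, hexp, tsum_mul_right,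
    ← Sk_eq_tsum_indicator] at h
  rw [← h.unique (hsum.div_const z)]
  simp [laplace]

theorem eqOn_re_pos_of_eq_ofReal {f g : ℂ → ℂ} (hf : AnalyticOnNhd ℂ f {z | 0 < z.re})
    (hg : AnalyticOnNhd ℂ g {z | 0 < z.re}) (h : ∀ s : ℝ, 0 < s → f s = g s) :
    EqOn f g {z | 0 < z.re} := by
  refine hf.eqOn_of_preconnected_of_frequently_eq hg (convex_halfSpace_re_gt 0).isPreconnected
    (z₀ := 1) (by simp) ?_
  have hlim : Tendsto ((↑) : ℝ → ℂ) (𝓝[≠] 1) (𝓝[≠] 1) := by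
    refine tendsto_nhdsWithin_iff.2 ⟨tendsto_nhdsWithin_of_tendsto_nhds
      (Complex.continuous_ofReal.tendsto' 1 1 Complex.ofReal_one), ?_⟩
    filter_upwards [self_mem_nhdsWithin] with s (hs : s ≠ 1) using by simpa using hs
  refine hlim.frequently (Eventually.frequently ?_)
  filter_upwards [nhdsWithin_le_nhds (lt_mem_nhds one_pos)] with s hs using h s hs

theorem laplace_rpow {b : ℝ} (hb : -1 < b) {z : ℂ} (hz : 0 < z.re) :
    laplace (· ^ b) z = Real.Gamma (b + 1) * z ^ (-((b : ℂ) + 1)) := by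
  refine eqOn_re_pos_of_eq_ofReal (g := fun z => Real.Gamma (b + 1) * z ^ (-((b : ℂ) + 1)))
    (analyticOnNhd_laplace (laplaceIntegrable_rpow hb)) ?_
    (fun s hs => ?_) hz
  · refine DifferentiableOn.analyticOnNhd (fun w hw => ?_)
      (isOpen_lt continuous_const Complex.continuous_re)
    have : w ∈ Complex.slitPlane := Or.inl hw
    fun_prop (disch := assumption)
  · rw [laplace_ofReal]
    have h := integral_powExp_Ioi_zero hb hs
    simp only [powExp] at h
    rw [h]
    push_cast [Complex.ofReal_cpow hs.le]
    rfl

theorem im_I_mul_pi_div (z : ℂ) : (Complex.I * π / z).im = π * (z.re / ‖z‖ ^ 2) := by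
  rw [show Complex.I * π / z = Complex.I * (π * z⁻¹) by ring, Complex.I_mul_im,
    Complex.re_ofReal_mul, Complex.inv_re, Complex.normSq_eq_norm_sq]

theorem tsum_exp_neg_mul_sq_eq_jacobiTheta {z : ℂ} (hz : 0 < z.re) :
    ∑' n : ℤ, Complex.exp (-(z * (n : ℂ) ^ 2)) =
      (z / π) ^ (-(1 / 2) : ℂ) * jacobiTheta (Complex.I * π / z) := by
  have hpi : (π : ℂ) ≠ 0 := by exact_mod_cast Real.pi_ne_zero
  have hz0 : z ≠ 0 := by rintro rfl; simp at hz
  have h := Complex.tsum_exp_neg_mul_int_sq (a := z / π) (by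
    rw [Complex.div_ofReal_re]
    positivity)
  rw [Complex.cpow_neg, jacobiTheta, ← one_div]
  convert h using 5
  · field_simp
  · field_simp
    rw [Complex.I_sq]
    ring

theorem ofReal_Vk_mul_Gamma (k : ℕ) :
    (Vk k : ℂ) * Real.Gamma ((k : ℝ) / 2 + 1) = (π : ℂ) ^ ((k : ℂ) / 2) := by
  have := (Real.Gamma_pos_of_pos (show (0 : ℝ) < (k : ℝ) / 2 + 1 by positivity)).ne'
  rw [← Complex.ofReal_mul, Vk, div_mul_cancel₀ _ this, Complex.ofReal_cpow Real.pi_pos.le]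
  push_cast
  rfl

theorem ofReal_mul_cpow {r : ℝ} (hr : 0 < r) {x : ℂ} (hx : x ≠ 0) (w : ℂ) :
    (r * x) ^ w = (r : ℂ) ^ w * x ^ w := by
  have hr0 : (r : ℂ) ≠ 0 := Complex.ofReal_ne_zero.2 hr.ne'
  rw [Complex.cpow_def_of_ne_zero (mul_ne_zero hr0 hx), Complex.cpow_def_of_ne_zero hr0,
    Complex.cpow_def_of_ne_zero hx, Complex.log_ofReal_mul hr hx, Complex.ofReal_log hr.le,
    add_mul, Complex.exp_add]

theorem Vk_mul_laplace_rpow (k : ℕ) {z : ℂ} (hz : 0 < z.re) :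
    Vk k * laplace (· ^ ((k : ℝ) / 2)) z = (z / π) ^ (-(k / 2) : ℂ) / z := by
  have hpi : (π : ℂ) ≠ 0 := by exact_mod_cast Real.pi_ne_zero
  have hz0 : z ≠ 0 := by rintro rfl; simp at hz
  have hpow : z ^ (-(k / 2) : ℂ) = (π : ℂ) ^ (-(k / 2) : ℂ) * (z / π) ^ (-(k / 2) : ℂ) := by
    rw [← ofReal_mul_cpow Real.pi_pos (div_ne_zero hz0 hpi), mul_div_cancel₀ _ hpi]
  rw [laplace_rpow (by linarith [k.cast_nonneg (α := ℝ)]) hz, ← mul_assoc, ofReal_Vk_mul_Gamma]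
  push_cast
  rw [neg_add', Complex.cpow_sub _ _ hz0, Complex.cpow_one, hpow, Complex.cpow_neg (π : ℂ)]
  field_simp

theorem laplace_Pk (k : ℕ) {z : ℂ} (hz : 0 < z.re) :
    laplace (Pk k) z =
      (z / π) ^ (-(k / 2) : ℂ) / z * (jacobiTheta (Complex.I * π / z) ^ k - 1) := by
  have hk : (-1 : ℝ) < (k : ℝ) / 2 := by linarith [k.cast_nonneg (α := ℝ)]
  have hS : laplace (fun t => Sk k t) z =
      laplace (Pk k) z + Vk k * laplace (· ^ ((k : ℝ) / 2)) z := by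
    have hrpow := (laplaceIntegrable_rpow hk).integrableOn_complex hz
    have hP := (laplaceIntegrable_Pk k).integrableOn_complex hz
    unfold laplace
    rw [← integral_const_mul, ← integral_add hP (hrpow.const_mul _)]
    congr 1 with t
    rw [Pk]
    push_cast
    ring
  have hpow : ((z / π) ^ (-(1 / 2) : ℂ)) ^ k = (z / π) ^ (-(k / 2) : ℂ) := by
    rw [← Complex.cpow_nat_mul]
    ring_nf
  rw [eq_sub_of_add_eq hS.symm, Vk_mul_laplace_rpow k hz, laplace_Sk k hz,
    tsum_exp_neg_mul_sq_eq_jacobiTheta hz, mul_pow, hpow]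
  ring

theorem norm_pow_sub_one_le (n : ℕ) {x : ℂ} {R : ℝ} (hR : 1 ≤ R) (hx : ‖x‖ ≤ R) :
    ‖x ^ n - 1‖ ≤ n * R ^ n * ‖x - 1‖ := by
  rw [← geom_sum_mul, norm_mul]
  gcongr
  refine (norm_sum_le _ _).trans ?_
  calc ∑ i ∈ Finset.range n, ‖x ^ i‖ ≤ ∑ _i ∈ Finset.range n, R ^ n := by
        refine Finset.sum_le_sum fun i hi => ?_
        rw [norm_pow]
        exact (pow_le_pow_left₀ (norm_nonneg _) hx i).trans
          (pow_le_pow_right₀ hR (Finset.mem_range.1 hi).le)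
    _ = n * R ^ n := by simp

theorem exp_neg_inv_le_factorial_mul_pow (M : ℕ) {r : ℝ} (hr : 0 < r) :
    Real.exp (-r⁻¹) ≤ M.factorial * r ^ M := by
  have h := pow_mul_exp_neg_le_factorial M (inv_nonneg.2 hr.le)
  rwa [inv_pow, inv_mul_le_iff₀' (by positivity)] at h

theorem norm_jacobiTheta_I_mul_pi_div_sub_one_le {z : ℂ} (hz : 0 < z.re)
    (hsector : ‖z‖ ≤ 3 * z.re) (hz1 : ‖z‖ ≤ 1) :
    ‖jacobiTheta (Complex.I * π / z) - 1‖ ≤ 4 * Real.exp (-‖z‖⁻¹) := by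
  have hnorm : 0 < ‖z‖ := hz.trans_le (Complex.re_le_norm z)
  have him : 0 < (Complex.I * π / z).im := by
    rw [im_I_mul_pi_div]
    positivity
  set q := Real.exp (-π * (Complex.I * π / z).im) with hq
  have hqle : q ≤ Real.exp (-‖z‖⁻¹) := by
    rw [hq, Real.exp_le_exp, im_I_mul_pi_div, neg_mul, neg_le_neg_iff, ← mul_assoc]
    calc ‖z‖⁻¹ = 3 * (‖z‖ / 3 / ‖z‖ ^ 2) := by field_simp
      _ ≤ π * π * (z.re / ‖z‖ ^ 2) := by
        gcongr
        · nlinarith [Real.pi_gt_three]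
        · linarith
  have hqhalf : q ≤ 1 / 2 := by
    calc q ≤ Real.exp (-1) :=
          hqle.trans (Real.exp_le_exp.2 (neg_le_neg ((one_le_inv₀ hnorm).2 hz1)))
      _ ≤ 1 / 2 := by linarith [Real.exp_neg_one_lt_half]
  calc ‖jacobiTheta (Complex.I * π / z) - 1‖ ≤ 2 / (1 - q) * q := norm_jacobiTheta_sub_one_le him
    _ ≤ 4 * q := by
      gcongr
      rw [div_le_iff₀] <;> linarith
    _ ≤ 4 * Real.exp (-‖z‖⁻¹) := by gcongr

theorem norm_div_pi_cpow_div_le (k : ℕ) {z : ℂ} (hz : z ≠ 0) (hz1 : ‖z‖ ≤ 1) :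
    ‖(z / π) ^ (-(k / 2) : ℂ) / z‖ ≤ π ^ k / ‖z‖ ^ (k + 1) := by
  have : 0 < ‖z‖ := norm_pos_iff.2 hz
  have hle : ‖z‖ / π ≤ 1 := by
    rw [div_le_one Real.pi_pos]
    linarith [Real.pi_gt_three]
  rw [norm_div, show (-(k / 2) : ℂ) = ((-(k / 2) : ℝ) : ℂ) by push_cast; rfl,
    Complex.norm_cpow_real, norm_div, Complex.norm_real, Real.norm_of_nonneg Real.pi_pos.le,
    pow_succ, ← div_div]
  gcongr
  calc (‖z‖ / π) ^ (-(k / 2) : ℝ) ≤ (‖z‖ / π) ^ (-k : ℝ) :=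
        Real.rpow_le_rpow_of_exponent_ge (by positivity) hle
          (by linarith [k.cast_nonneg (α := ℝ)])
    _ = π ^ k / ‖z‖ ^ k := by
      rw [Real.rpow_neg (by positivity), Real.rpow_natCast, div_pow, inv_div]

theorem laplaceFlat_Pk (k : ℕ) : LaplaceFlat (Pk k) := by
  intro N
  refine ⟨π ^ k * (k * 5 ^ k * (4 * (N + (k + 1)).factorial)), fun z hz hsector hz1 => ?_⟩
  have hnorm : 0 < ‖z‖ := hz.trans_le (Complex.re_le_norm z)
  set θ := jacobiTheta (Complex.I * π / z)
  have hθ1 : ‖θ - 1‖ ≤ 4 * Real.exp (-‖z‖⁻¹) :=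
    norm_jacobiTheta_I_mul_pi_div_sub_one_le hz hsector hz1
  have hθ : ‖θ‖ ≤ 5 := by
    have hexp : Real.exp (-‖z‖⁻¹) ≤ 1 := Real.exp_le_one_iff.2 (by simp)
    calc ‖θ‖ = ‖θ - 1 + 1‖ := by rw [sub_add_cancel]
      _ ≤ ‖θ - 1‖ + ‖(1 : ℂ)‖ := norm_add_le _ _
      _ ≤ 5 := by
        rw [norm_one]
        linarith
  rw [laplace_Pk k hz, norm_mul]
  calc ‖(z / π) ^ (-(k / 2) : ℂ) / z‖ * ‖θ ^ k - 1‖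
      ≤ π ^ k / ‖z‖ ^ (k + 1) *
          (k * 5 ^ k * (4 * ((N + (k + 1)).factorial * ‖z‖ ^ (N + (k + 1))))) := by
        gcongr
        · exact norm_div_pi_cpow_div_le k (norm_pos_iff.1 hnorm) hz1
        · refine (norm_pow_sub_one_le k (by norm_num) hθ).trans ?_
          gcongr
          refine hθ1.trans ?_
          gcongr
          exact exp_neg_inv_le_factorial_mul_pow _ hnorm
    _ = π ^ k * (k * 5 ^ k * (4 * (N + (k + 1)).factorial)) * ‖z‖ ^ N := by
      rw [pow_add ‖z‖ N]
      field_simp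

/-! ### Expansions over a unit cell -/

theorem abs_intervalIntegral_le_of_hasDerivAt_add {x y : ℝ} (hxy : x ≤ y) {Φ m r B : ℝ → ℝ}
    (hΦ : ∀ t ∈ Icc x y, HasDerivAt Φ (m t + r t) t) (hend : Φ y = Φ x)
    (hm : ContinuousOn m (Icc x y)) (hr : ContinuousOn r (Icc x y))
    (hB : IntervalIntegrable B volume x y) (h : ∀ t ∈ Icc x y, |r t| ≤ B t) :
    |∫ t in x..y, m t| ≤ ∫ t in x..y, B t := by
  have hm' := hm.intervalIntegrable_of_Icc (μ := volume) hxy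
  have hr' := hr.intervalIntegrable_of_Icc (μ := volume) hxy
  have hsum : ∫ t in x..y, (m t + r t) = 0 := by
    rw [intervalIntegral.integral_eq_sub_of_hasDerivAt (by rwa [uIcc_of_le hxy]) (hm'.add hr'),
      hend, sub_self]
  rw [intervalIntegral.integral_add hm' hr', add_eq_zero_iff_eq_neg] at hsum
  rw [hsum, abs_neg]
  exact intervalIntegral.norm_integral_le_of_norm_le (f := r) hxy
    (ae_of_all _ fun t ht => h t (Ioc_subset_Icc_self ht)) hB

theorem abs_intervalIntegral_mul_sub_half_le {x : ℝ} {f f' f'' g g' B : ℝ → ℝ} (hfx : f x = 0)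
    (hf : ∀ t ∈ Icc x (x + 1), HasDerivAt f (f' t) t)
    (hf' : ∀ t ∈ Icc x (x + 1), HasDerivAt f' (f'' t) t)
    (hg : ∀ t ∈ Icc x (x + 1), HasDerivAt g (g' t) t)
    (hcf : ContinuousOn f'' (Icc x (x + 1))) (hcg : ContinuousOn g' (Icc x (x + 1)))
    (hB : IntervalIntegrable B volume x (x + 1))
    (h : ∀ t ∈ Icc x (x + 1), |f t * g' t| + |f'' t * g t| + |f' t * g' t| ≤ B t) :
    |∫ t in x..(x + 1), (f t * g t - f' t * g t / 2)| ≤ ∫ t in x..(x + 1), B t := by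
  have cf : ContinuousOn f (Icc x (x + 1)) := HasDerivAt.continuousOn hf
  have cf' : ContinuousOn f' (Icc x (x + 1)) := HasDerivAt.continuousOn hf'
  have cg : ContinuousOn g (Icc x (x + 1)) := HasDerivAt.continuousOn hg
  refine abs_intervalIntegral_le_of_hasDerivAt_add (by linarith)
    (Φ := fun t => (t - x - 1) * (f t * g t) + ((t - x) - (t - x) ^ 2) / 2 * (f' t * g t))
    (r := fun t => (t - x - 1) * (f t * g' t) +
      ((t - x) - (t - x) ^ 2) / 2 * (f'' t * g t + f' t * g' t))
    (fun t ht => ?_) (by simp [hfx]) (by fun_prop) (by fun_prop) hB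
    fun t ht => le_trans ?_ (h t ht)
  · have hu : HasDerivAt (fun t => t - x) 1 t := (hasDerivAt_id t).sub_const x
    refine (((hu.sub_const 1).mul ((hf t ht).mul (hg t ht))).add
      (((hu.sub (hu.pow 2)).div_const 2).mul ((hf' t ht).mul (hg t ht)))).congr_deriv ?_
    simp only [Pi.mul_apply, Pi.sub_apply, Pi.pow_apply]
    push_cast
    ring
  · have hu0 : 0 ≤ t - x := sub_nonneg.2 ht.1
    have hu1 : t - x ≤ 1 := by linarith [ht.2]
    generalize t - x = u at *
    have hp : |u - 1| ≤ 1 := abs_le.2 ⟨by linarith, by linarith⟩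
    have hq : |(u - u ^ 2) / 2| ≤ 1 := abs_le.2 ⟨by nlinarith, by nlinarith⟩
    calc |(u - 1) * (f t * g' t) + (u - u ^ 2) / 2 * (f'' t * g t + f' t * g' t)|
        ≤ 1 * |f t * g' t| + 1 * (|f'' t * g t| + |f' t * g' t|) := by
          refine (abs_add_le _ _).trans ?_
          rw [abs_mul (u - 1), abs_mul ((u - u ^ 2) / 2)]
          gcongr
          exact abs_add_le _ _
      _ = |f t * g' t| + |f'' t * g t| + |f' t * g' t| := by ring

/-- The weight of `f * g'` in the second order expansion of `∫ f * g` over a unit cell. -/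
noncomputable def weightZeroOne (u : ℝ) : ℝ := -(1 - u) ^ 2 / 2

/-- The weight of `f'' * g` in the second order expansion of `∫ f * g` over a unit cell. -/
noncomputable def weightTwoZero (u : ℝ) : ℝ := u * (1 - u) * (1 - 2 * u) / 12

/-- The weight of `f' * g'` in the second order expansion of `∫ f * g` over a unit cell. -/
noncomputable def weightOneOne (u : ℝ) : ℝ := 5 * u / 12 - 3 * u ^ 2 / 4 + u ^ 3 / 3

@[fun_prop]
theorem continuous_weightZeroOne : Continuous weightZeroOne := by
  unfold weightZeroOne
  fun_prop

@[fun_prop]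
theorem continuous_weightTwoZero : Continuous weightTwoZero := by
  unfold weightTwoZero
  fun_prop

@[fun_prop]
theorem continuous_weightOneOne : Continuous weightOneOne := by
  unfold weightOneOne
  fun_prop

theorem hasDerivAt_weightZeroOne (u : ℝ) : HasDerivAt weightZeroOne (1 - u) u :=
  (((hasDerivAt_id u).const_sub 1).pow 2).neg.div_const 2 |>.congr_deriv (by
    simp only [id]
    push_cast
    ring)

theorem hasDerivAt_weightTwoZero (u : ℝ) :
    HasDerivAt weightTwoZero (1 / 12 - u / 2 + u ^ 2 / 2) u := by
  have h := hasDerivAt_id u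
  refine (((h.mul (h.const_sub 1)).mul ((h.const_mul 2).const_sub 1)).div_const 12).congr_deriv ?_
  simp only [Pi.mul_apply, id]
  ring

theorem hasDerivAt_weightOneOne (u : ℝ) :
    HasDerivAt weightOneOne (5 / 12 - 3 * u / 2 + u ^ 2) u := by
  have h := hasDerivAt_id u
  refine ((((h.const_mul 5).div_const 12).sub (((h.pow 2).const_mul 3).div_const 4)).add
    ((h.pow 3).div_const 3)).congr_deriv ?_
  simp only [id]
  push_cast
  ring

theorem abs_weightZeroOne_le {u : ℝ} (hu : u ∈ Icc 0 1) : |weightZeroOne u| ≤ 1 := by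
  obtain ⟨hu0, hu1⟩ := hu
  rw [weightZeroOne, abs_le]
  constructor <;> nlinarith

theorem abs_weightTwoZero_le {u : ℝ} (hu : u ∈ Icc 0 1) : |weightTwoZero u| ≤ 1 := by
  obtain ⟨hu0, hu1⟩ := hu
  have h : 0 ≤ u * (1 - u) := mul_nonneg hu0 (by linarith)
  have h0 := mul_nonneg h hu0
  have h1 := mul_nonneg h (sub_nonneg.2 hu1)
  rw [weightTwoZero, abs_le]
  constructor <;> nlinarith

theorem abs_weightOneOne_le {u : ℝ} (hu : u ∈ Icc 0 1) : |weightOneOne u| ≤ 1 := by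
  obtain ⟨hu0, hu1⟩ := hu
  rw [weightOneOne, abs_le]
  constructor <;> nlinarith [pow_nonneg hu0 3, pow_le_one₀ (n := 3) hu0 hu1]

/- When `f x = 0`, this primitive takes the same value at `x` and `x + 1`; the weights are chosen so
that its derivative is the second order defect up to terms with three derivatives. -/
theorem hasDerivAt_secondOrderPrimitive (x : ℝ) {t : ℝ} {f f' f'' g g' : ℝ → ℝ}
    {f''' g'' : ℝ} (hf : HasDerivAt f (f' t) t) (hf' : HasDerivAt f' (f'' t) t)
    (hf'' : HasDerivAt f'' f''' t) (hg : HasDerivAt g (g' t) t) (hg' : HasDerivAt g' g'' t) :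
    HasDerivAt (fun t => (t - x - 1) * (f t * g t) + ((t - x) - (t - x) ^ 2) / 2 * (f' t * g t) +
        weightZeroOne (t - x) * (f t * g' t) + weightTwoZero (t - x) * (f'' t * g t) +
        weightOneOne (t - x) * (f' t * g' t))
      (f t * g t - f' t * g t / 2 - (f' t * g' t - f'' t * g t) / 12 +
        (weightZeroOne (t - x) * (f t * g'') + weightTwoZero (t - x) * (f''' * g t) +
          (weightTwoZero (t - x) + weightOneOne (t - x)) * (f'' t * g' t) +
          weightOneOne (t - x) * (f' t * g''))) t := by
  have hu : HasDerivAt (fun t => t - x) 1 t := (hasDerivAt_id t).sub_const x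
  refine ((((((hu.sub_const 1).mul (hf.mul hg)).add
    (((hu.sub (hu.pow 2)).div_const 2).mul (hf'.mul hg))).add
    (((hasDerivAt_weightZeroOne (t - x)).comp_sub_const t x).mul (hf.mul hg'))).add
    (((hasDerivAt_weightTwoZero (t - x)).comp_sub_const t x).mul (hf''.mul hg))).add
    (((hasDerivAt_weightOneOne (t - x)).comp_sub_const t x).mul (hf'.mul hg'))).congr_deriv ?_
  simp only [Pi.mul_apply, Pi.sub_apply, Pi.pow_apply, weightZeroOne]
  push_cast
  ring

theorem abs_intervalIntegral_mul_sub_half_sub_twelfth_le {x : ℝ}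
    {f f' f'' f''' g g' g'' B : ℝ → ℝ} (hfx : f x = 0)
    (hf : ∀ t ∈ Icc x (x + 1), HasDerivAt f (f' t) t)
    (hf' : ∀ t ∈ Icc x (x + 1), HasDerivAt f' (f'' t) t)
    (hf'' : ∀ t ∈ Icc x (x + 1), HasDerivAt f'' (f''' t) t)
    (hg : ∀ t ∈ Icc x (x + 1), HasDerivAt g (g' t) t)
    (hg' : ∀ t ∈ Icc x (x + 1), HasDerivAt g' (g'' t) t)
    (hcf : ContinuousOn f''' (Icc x (x + 1))) (hcg : ContinuousOn g'' (Icc x (x + 1)))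
    (hB : IntervalIntegrable B volume x (x + 1))
    (h : ∀ t ∈ Icc x (x + 1),
      |f t * g'' t| + |f' t * g'' t| + 2 * |f'' t * g' t| + |f''' t * g t| ≤ B t) :
    |∫ t in x..(x + 1), (f t * g t - f' t * g t / 2 - (f' t * g' t - f'' t * g t) / 12)| ≤
      ∫ t in x..(x + 1), B t := by
  have cf : ContinuousOn f (Icc x (x + 1)) := HasDerivAt.continuousOn hf
  have cf' : ContinuousOn f' (Icc x (x + 1)) := HasDerivAt.continuousOn hf'
  have cf'' : ContinuousOn f'' (Icc x (x + 1)) := HasDerivAt.continuousOn hf''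
  have cg : ContinuousOn g (Icc x (x + 1)) := HasDerivAt.continuousOn hg
  have cg' : ContinuousOn g' (Icc x (x + 1)) := HasDerivAt.continuousOn hg'
  refine abs_intervalIntegral_le_of_hasDerivAt_add (by linarith)
    (fun t ht => hasDerivAt_secondOrderPrimitive x (hf t ht) (hf' t ht) (hf'' t ht) (hg t ht)
      (hg' t ht))
    (by norm_num [hfx, weightZeroOne, weightTwoZero, weightOneOne]) (by fun_prop) (by fun_prop) hB
    fun t ht => le_trans ?_ (h t ht)
  have hu : t - x ∈ Icc (0 : ℝ) 1 := ⟨sub_nonneg.2 ht.1, by linarith [ht.2]⟩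
  have h01 := abs_weightZeroOne_le hu
  have h20 := abs_weightTwoZero_le hu
  have h11 := abs_weightOneOne_le hu
  generalize weightZeroOne (t - x) = w₀₁, weightTwoZero (t - x) = w₂₀,
    weightOneOne (t - x) = w₁₁ at *
  calc |w₀₁ * (f t * g'' t) + w₂₀ * (f''' t * g t) + (w₂₀ + w₁₁) * (f'' t * g' t) +
        w₁₁ * (f' t * g'' t)|
      ≤ |w₀₁| * |f t * g'' t| + |w₂₀| * |f''' t * g t| + |w₂₀ + w₁₁| * |f'' t * g' t| +
        |w₁₁| * |f' t * g'' t| := by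
        simp only [← abs_mul]
        refine (abs_add_le _ _).trans ?_
        gcongr
        exact abs_add_three _ _ _
    _ ≤ 1 * |f t * g'' t| + 1 * |f''' t * g t| + (1 + 1) * |f'' t * g' t| +
        1 * |f' t * g'' t| := by
        gcongr
        exact (abs_add_le _ _).trans (add_le_add h20 h11)
    _ = |f t * g'' t| + |f' t * g'' t| + 2 * |f'' t * g' t| + |f''' t * g t| := by ring

theorem pow_mul_powExp_le_powExp_sub (j : ℕ) {s : ℝ} (b : ℝ) {t : ℝ} (hs : 0 ≤ s) (ht : 0 < t) :
    s ^ j * powExp s b t ≤ 2 ^ j * j.factorial * powExp (s / 2) (b - j) t := by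
  have h := pow_mul_powExp_le j (b - j) hs ht.le
  have hb := rpow_mul_powExp s j (b - j) ht
  rw [Real.rpow_natCast, add_sub_cancel] at hb
  rwa [mul_pow, mul_assoc, hb] at h

theorem powExp_le_powExp_half {s t : ℝ} (b : ℝ) (hs : 0 ≤ s) (ht : 0 < t) :
    powExp s b t ≤ powExp (s / 2) b t := by
  simpa using pow_mul_powExp_le_powExp_sub 0 b hs ht

theorem mul_powExp_le_powExp_sub_one {s t : ℝ} (b : ℝ) (hs : 0 ≤ s) (ht : 0 < t) :
    s * powExp s b t ≤ 2 * powExp (s / 2) (b - 1) t := by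
  simpa using pow_mul_powExp_le_powExp_sub 1 b hs ht

theorem sq_mul_powExp_le_powExp_sub_two {s t : ℝ} (b : ℝ) (hs : 0 ≤ s) (ht : 0 < t) :
    s ^ 2 * powExp s b t ≤ 8 * powExp (s / 2) (b - 2) t := by
  have h := pow_mul_powExp_le_powExp_sub 2 b hs ht
  norm_num at h
  exact h

theorem hasDerivAt_powExp (s b : ℝ) {t : ℝ} (ht : 0 < t) :
    HasDerivAt (powExp s b) (b * powExp s (b - 1) t - s * powExp s b t) t := by
  have hpow := Real.hasDerivAt_rpow_const (x := t) (p := b) (Or.inl ht.ne')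
  have hexp : HasDerivAt (fun t => Real.exp (-(s * t))) (Real.exp (-(s * t)) * (-(s * 1))) t :=
    ((hasDerivAt_id t).const_mul s).neg.exp
  refine (hpow.mul hexp).congr_deriv ?_
  rw [powExp, powExp]
  ring

theorem rpow_sub_rpow_le {a x t : ℝ} (ha : 1 ≤ a) (hx : 0 ≤ x) (ht : 0 < t) (htx : t ≤ x + 1) :
    t ^ a - x ^ a ≤ a * t ^ (a - 1) := by
  have hbern := one_add_mul_self_le_rpow_one_add
    (show -1 ≤ x / t - 1 by linarith [div_nonneg hx ht.le]) ha
  rw [add_sub_cancel, Real.div_rpow hx ht.le, le_div_iff₀ (by positivity)] at hbern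
  have hpow : t ^ a = t * t ^ (a - 1) := by
    rw [Real.rpow_sub_one ht.ne']
    field_simp
  have hslope : (1 + a * (x / t - 1)) * t ^ a = t ^ a - a * (t - x) * t ^ (a - 1) := by
    rw [hpow]
    field_simp
    ring
  have hstep : a * (t - x) * t ^ (a - 1) ≤ a * 1 * t ^ (a - 1) := by
    gcongr
    linarith
  linarith

theorem abs_rpow_sub_rpow_le {a x t : ℝ} (ha : 1 ≤ a) (hx : 0 ≤ x) (ht : 0 < t) (hxt : x ≤ t)
    (htx : t ≤ x + 1) : |t ^ a - x ^ a| ≤ a * t ^ (a - 1) := by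
  rw [abs_of_nonneg (sub_nonneg.2 (Real.rpow_le_rpow hx hxt (by linarith)))]
  exact rpow_sub_rpow_le ha hx ht htx

theorem continuousOn_powExp (s b : ℝ) {S : Set ℝ} (hS : ∀ t ∈ S, 0 < t) :
    ContinuousOn (powExp s b) S :=
  HasDerivAt.continuousOn fun t ht => hasDerivAt_powExp s b (hS t ht)

/-- The second order term in the mean of `(t ^ a - ⌊t⌋ ^ a) * exp (-(s * t))` over unit cells. -/
noncomputable def gapCorr (s a t : ℝ) : ℝ :=
  (s * a * powExp s (a - 1) t + a * (a - 1) * powExp s (a - 2) t) / 12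

/-- A smooth function approximating `(t ^ a - ⌊t⌋ ^ a) * exp (-(s * t))` to second order in the
mean over unit cells. -/
noncomputable def gapMean (s a t : ℝ) : ℝ := a / 2 * powExp s (a - 1) t - gapCorr s a t

theorem intervalIntegrable_powExp (s b : ℝ) {x y : ℝ} (hx : 0 < x) (hxy : x ≤ y) :
    IntervalIntegrable (powExp s b) volume x y :=
  (continuousOn_powExp s b fun _ ht => hx.trans_le ht.1).intervalIntegrable_of_Icc hxy

theorem abs_gap_derivs_le {s a x t : ℝ} (hs : 0 ≤ s) (ha : 1 ≤ a) (hx : 0 < x) (hxt : x ≤ t)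
    (htx : t ≤ x + 1) :
    |(t ^ a - x ^ a) * (s ^ 2 * Real.exp (-(s * t)))| +
        |a * t ^ (a - 1) * (s ^ 2 * Real.exp (-(s * t)))| +
        2 * |a * (a - 1) * t ^ (a - 2) * (-s * Real.exp (-(s * t)))| +
        |a * (a - 1) * (a - 2) * t ^ (a - 3) * Real.exp (-(s * t))| ≤
      (16 * a + 4 * a * (a - 1) + |a * (a - 1) * (a - 2)|) * powExp (s / 2) (a - 3) t := by
  have ht : 0 < t := hx.trans_le hxt
  have : 0 ≤ a - 1 := by linarith
  have h₀ := powExp_le_powExp_half (a - 3) hs ht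
  have h₁ := mul_powExp_le_powExp_sub_one (a - 2) hs ht
  have h₂ := sq_mul_powExp_le_powExp_sub_two (a - 1) hs ht
  rw [show a - 2 - 1 = a - 3 by ring] at h₁
  rw [show a - 1 - 2 = a - 3 by ring] at h₂
  have hf : |(t ^ a - x ^ a) * (s ^ 2 * Real.exp (-(s * t)))| ≤
      a * (s ^ 2 * powExp s (a - 1) t) := by
    rw [abs_mul, abs_of_nonneg (by positivity : 0 ≤ s ^ 2 * Real.exp (-(s * t)))]
    calc |t ^ a - x ^ a| * (s ^ 2 * Real.exp (-(s * t)))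
        ≤ a * t ^ (a - 1) * (s ^ 2 * Real.exp (-(s * t))) := by
          gcongr
          exact abs_rpow_sub_rpow_le ha hx.le ht hxt htx
      _ = a * (s ^ 2 * powExp s (a - 1) t) := by
        rw [powExp]
        ring
  have hf' : |a * t ^ (a - 1) * (s ^ 2 * Real.exp (-(s * t)))| =
      a * (s ^ 2 * powExp s (a - 1) t) := by
    rw [abs_of_nonneg (by positivity), powExp]
    ring
  have hf'' : |a * (a - 1) * t ^ (a - 2) * (-s * Real.exp (-(s * t)))| =
      a * (a - 1) * (s * powExp s (a - 2) t) := by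
    rw [neg_mul, mul_neg, abs_neg, abs_of_nonneg (by positivity), powExp]
    ring
  have hf''' : |a * (a - 1) * (a - 2) * t ^ (a - 3) * Real.exp (-(s * t))| =
      |a * (a - 1) * (a - 2)| * powExp s (a - 3) t := by
    rw [mul_assoc _ (t ^ _), ← powExp, abs_mul, abs_of_nonneg (powExp_nonneg s _ ht.le)]
  rw [hf', hf'', hf''']
  generalize powExp (s / 2) (a - 3) t = p at *
  calc _ ≤ a * (8 * p) + a * (8 * p) + 2 * (a * (a - 1) * (2 * p)) +
        |a * (a - 1) * (a - 2)| * p := by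
        gcongr
        exact hf.trans (by gcongr)
    _ = _ := by ring

theorem abs_intervalIntegral_gap_sub_gapMean_le {s a x : ℝ} (hs : 0 ≤ s) (ha : 1 ≤ a)
    (hx : 0 < x) :
    |∫ t in x..(x + 1), ((t ^ a - x ^ a) * Real.exp (-(s * t)) - gapMean s a t)| ≤
      ∫ t in x..(x + 1),
        (16 * a + 4 * a * (a - 1) + |a * (a - 1) * (a - 2)|) * powExp (s / 2) (a - 3) t := by
  have hpow (b : ℝ) : ∀ t ∈ Icc x (x + 1), HasDerivAt (fun t => t ^ b) (b * t ^ (b - 1)) t :=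
    fun t ht => Real.hasDerivAt_rpow_const (Or.inl (hx.trans_le ht.1).ne')
  have hexp (t : ℝ) : HasDerivAt (fun t => Real.exp (-(s * t))) (-s * Real.exp (-(s * t))) t :=
    ((hasDerivAt_id t).const_mul s).neg.exp.congr_deriv (by simp [mul_comm])
  have key := abs_intervalIntegral_mul_sub_half_sub_twelfth_le
    (f := fun t => t ^ a - x ^ a) (f' := fun t => a * t ^ (a - 1))
    (f'' := fun t => a * (a - 1) * t ^ (a - 2))
    (f''' := fun t => a * (a - 1) * (a - 2) * t ^ (a - 3))
    (g := fun t => Real.exp (-(s * t))) (g' := fun t => -s * Real.exp (-(s * t)))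
    (g'' := fun t => s ^ 2 * Real.exp (-(s * t))) (sub_self _)
    (fun t ht => (hpow a t ht).sub_const _)
    (fun t ht => ((hpow (a - 1) t ht).const_mul a).congr_deriv (by ring_nf))
    (fun t ht => ((hpow (a - 2) t ht).const_mul (a * (a - 1))).congr_deriv (by ring_nf))
    (fun t _ => hexp t) (fun t _ => ((hexp t).const_mul (-s)).congr_deriv (by ring))
    (continuousOn_const.mul (HasDerivAt.continuousOn (hpow (a - 3)))) (by fun_prop)
    ((intervalIntegrable_powExp (s / 2) (a - 3) hx (by linarith)).const_mul _)
    fun t ht => abs_gap_derivs_le hs ha hx ht.1 ht.2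
  refine (congrArg abs (intervalIntegral.integral_congr fun t _ => ?_)).trans_le key
  simp only [gapMean, gapCorr, powExp]
  ring

theorem abs_deriv_powExp_le {s b t : ℝ} (hs : 0 ≤ s) (ht : 0 < t) :
    |b * powExp s (b - 1) t - s * powExp s b t| ≤ (|b| + 2) * powExp (s / 2) (b - 1) t := by
  calc |b * powExp s (b - 1) t - s * powExp s b t|
      ≤ |b| * powExp s (b - 1) t + s * powExp s b t := by
        refine (abs_sub _ _).trans_eq ?_
        rw [abs_mul, abs_of_nonneg (powExp_nonneg s (b - 1) ht.le),
          abs_of_nonneg (mul_nonneg hs (powExp_nonneg s b ht.le))]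
    _ ≤ |b| * powExp (s / 2) (b - 1) t + 2 * powExp (s / 2) (b - 1) t :=
      add_le_add (mul_le_mul_of_nonneg_left (powExp_le_powExp_half (b - 1) hs ht) (abs_nonneg b))
        (mul_powExp_le_powExp_sub_one b hs ht)
    _ = _ := by ring

theorem abs_gap_mul_powExp_derivs_le {s a b x t : ℝ} (hs : 0 ≤ s) (ha : 1 ≤ a) (hx : 0 < x)
    (hxt : x ≤ t) (htx : t ≤ x + 1) :
    |(t ^ a - x ^ a) * (b * powExp s (b - 1) t - s * powExp s b t)| +
        |a * (a - 1) * t ^ (a - 2) * powExp s b t| +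
        |a * t ^ (a - 1) * (b * powExp s (b - 1) t - s * powExp s b t)| ≤
      (2 * a * (|b| + 2) + a * (a - 1)) * powExp (s / 2) (a + b - 2) t := by
  have ht : 0 < t := hx.trans_le hxt
  have : 0 ≤ a - 1 := by linarith
  have hp := powExp_nonneg s b ht.le
  have hg' := abs_deriv_powExp_le (b := b) hs ht
  calc _ ≤ a * t ^ (a - 1) * ((|b| + 2) * powExp (s / 2) (b - 1) t) +
        a * (a - 1) * t ^ (a - 2) * powExp (s / 2) b t +
        a * t ^ (a - 1) * ((|b| + 2) * powExp (s / 2) (b - 1) t) := by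
        rw [abs_mul (t ^ a - x ^ a), abs_mul (a * t ^ (a - 1)),
          abs_of_nonneg (by positivity : 0 ≤ a * t ^ (a - 1)),
          abs_of_nonneg (by positivity : 0 ≤ a * (a - 1) * t ^ (a - 2) * powExp s b t)]
        gcongr
        · exact abs_rpow_sub_rpow_le ha hx.le ht hxt htx
        · exact powExp_le_powExp_half b hs ht
    _ = a * (|b| + 2) * (t ^ (a - 1) * powExp (s / 2) (b - 1) t) +
        a * (a - 1) * (t ^ (a - 2) * powExp (s / 2) b t) +
        a * (|b| + 2) * (t ^ (a - 1) * powExp (s / 2) (b - 1) t) := by ring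
    _ = _ := by
      rw [rpow_mul_powExp _ _ _ ht, rpow_mul_powExp _ _ _ ht]
      ring_nf

theorem abs_intervalIntegral_gap_mul_powExp_sub_le {s a x : ℝ} (b : ℝ) (hs : 0 ≤ s) (ha : 1 ≤ a)
    (hx : 0 < x) :
    |∫ t in x..(x + 1), ((t ^ a - x ^ a) * powExp s b t - a / 2 * powExp s (a + b - 1) t)| ≤
      ∫ t in x..(x + 1), (2 * a * (|b| + 2) + a * (a - 1)) * powExp (s / 2) (a + b - 2) t := by
  have hpos : ∀ t ∈ Icc x (x + 1), 0 < t := fun t ht => hx.trans_le ht.1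
  have hpow (b : ℝ) : ∀ t ∈ Icc x (x + 1), HasDerivAt (fun t => t ^ b) (b * t ^ (b - 1)) t :=
    fun t ht => Real.hasDerivAt_rpow_const (Or.inl (hpos t ht).ne')
  have hcont (b : ℝ) := continuousOn_powExp s b hpos
  have key := abs_intervalIntegral_mul_sub_half_le
    (f := fun t => t ^ a - x ^ a) (f' := fun t => a * t ^ (a - 1))
    (f'' := fun t => a * (a - 1) * t ^ (a - 2)) (g := powExp s b) (sub_self _)
    (fun t ht => (hpow a t ht).sub_const _)
    (fun t ht => ((hpow (a - 1) t ht).const_mul a).congr_deriv (by ring_nf))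
    (fun t ht => hasDerivAt_powExp s b (hpos t ht))
    (continuousOn_const.mul (HasDerivAt.continuousOn (hpow (a - 2))))
    ((continuousOn_const.mul (hcont _)).sub (continuousOn_const.mul (hcont _)))
    ((intervalIntegrable_powExp (s / 2) (a + b - 2) hx (by linarith)).const_mul _)
    fun t ht => abs_gap_mul_powExp_derivs_le hs ha hx ht.1 ht.2
  refine (congrArg abs (intervalIntegral.integral_congr fun t ht => ?_)).trans_le key
  rw [uIcc_of_le (by linarith)] at ht
  have h := rpow_mul_powExp s (a - 1) b (hpos t ht)
  simp only [mul_assoc a, h]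
  ring_nf

/-! ### Tail integrals -/

theorem abs_setIntegral_Ioi_one_le_of_cells {F H : ℝ → ℝ} (hF : IntegrableOn F (Ioi 1))
    (hH : IntegrableOn H (Ioi 1))
    (h : ∀ n : ℕ, 1 ≤ n → |∫ t in (n : ℝ)..(n + 1), F t| ≤ ∫ t in (n : ℝ)..(n + 1), H t) :
    |∫ t in Ioi 1, F t| ≤ ∫ t in Ioi 1, H t := by
  have hcells {G : ℝ → ℝ} (hG : IntegrableOn G (Ioi 1)) (N : ℕ) :
      ∫ t in (1 : ℝ)..((N + 1 : ℕ) : ℝ), G t =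
        ∑ n ∈ Finset.range N, ∫ t in ((n + 1 : ℕ) : ℝ)..((n + 1 : ℕ) + 1 : ℝ), G t := by
    have hsum := intervalIntegral.sum_integral_adjacent_intervals (μ := volume) (f := G)
      (a := fun n => ((n + 1 : ℕ) : ℝ)) (n := N) fun n _ => by
        rw [intervalIntegrable_iff_integrableOn_Ioc_of_le (by push_cast; linarith)]
        refine hG.mono_set fun t ht => lt_of_le_of_lt ?_ ht.1
        exact_mod_cast Nat.le_add_left 1 n
    simpa using hsum.symm
  have hlim {G : ℝ → ℝ} (hG : IntegrableOn G (Ioi 1)) :=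
    intervalIntegral_tendsto_integral_Ioi (1 : ℝ) hG
      (tendsto_natCast_atTop_atTop.comp (tendsto_add_atTop_nat 1))
  refine le_of_tendsto_of_tendsto' (hlim hF).abs (hlim hH) fun N => ?_
  simp only [Function.comp_apply]
  rw [hcells hF, hcells hH]
  exact (Finset.abs_sum_le_sum_abs _ _).trans
    (Finset.sum_le_sum fun n _ => h (n + 1) (Nat.le_add_left 1 n))

theorem natCast_floor_eq_of_mem_Ico {n : ℕ} {t : ℝ} (h : t ∈ Ico (n : ℝ) (n + 1)) :
    (⌊t⌋ : ℝ) = n := by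
  have : ⌊t⌋ = (n : ℤ) := Int.floor_eq_iff.2 ⟨by simpa using h.1, by simpa using h.2⟩
  simp [this]

theorem abs_setIntegral_Ioi_one_le_of_floor_cells {F : ℝ → ℝ → ℝ} {H : ℝ → ℝ}
    (hF : IntegrableOn (fun t => F ⌊t⌋ t) (Ioi 1)) (hH : IntegrableOn H (Ioi 1))
    (h : ∀ n : ℕ, 1 ≤ n → |∫ t in (n : ℝ)..(n + 1), F n t| ≤ ∫ t in (n : ℝ)..(n + 1), H t) :
    |∫ t in Ioi 1, F ⌊t⌋ t| ≤ ∫ t in Ioi 1, H t := by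
  refine abs_setIntegral_Ioi_one_le_of_cells hF hH fun n hn => ?_
  rw [intervalIntegral.integral_congr_Ioo_of_le (by linarith) fun t ht => by
    rw [natCast_floor_eq_of_mem_Ico (Ioo_subset_Ico_self ht)]]
  exact h n hn

theorem integrableOn_Ioi_one_of_abs_le {s b K : ℝ} {f : ℝ → ℝ} (hs : 0 < s) (hf : Measurable f)
    (h : ∀ t, 1 < t → |f t| ≤ K * powExp s b t) : IntegrableOn f (Ioi 1) :=
  ((integrableOn_powExp_Ioi_one b hs).const_mul K).mono' hf.aestronglyMeasurable
    (ae_restrict_of_forall_mem measurableSet_Ioi h)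

theorem setIntegral_Ioi_one_powExp_half_le {s b : ℝ} (hb : -1 < b) (hs : 0 < s) :
    ∫ t in Ioi 1, powExp (s / 2) b t ≤ Real.Gamma (b + 1) * 2 ^ (b + 1) * s ^ (-(b + 1)) := by
  have hi := integrableOn_powExp_Ioi_zero hb (half_pos hs)
  calc ∫ t in Ioi 1, powExp (s / 2) b t ≤ ∫ t in Ioi 0, powExp (s / 2) b t :=
        setIntegral_mono_set hi (ae_restrict_of_forall_mem measurableSet_Ioi fun t ht =>
          powExp_nonneg (s / 2) b (le_of_lt ht)) (Ioi_subset_Ioi zero_le_one).eventuallyLE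
    _ = _ := by
      rw [integral_powExp_Ioi_zero hb (half_pos hs), Real.div_rpow hs.le zero_le_two,
        Real.rpow_neg zero_le_two]
      field_simp

/-- The functions `F s` are integrable over the half-line `t > 1`, with integral `O(s ^ (-c))` as
`s → 0+`. -/
def TailBigO (c : ℝ) (F : ℝ → ℝ → ℝ) : Prop :=
  ∃ K : ℝ, ∀ s : ℝ, 0 < s → s ≤ 1 →
    IntegrableOn (F s) (Ioi 1) ∧ |∫ t in Ioi 1, F s t| ≤ K * s ^ (-c)

namespace TailBigO

variable {c : ℝ} {F G : ℝ → ℝ → ℝ}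

theorem congr (hF : TailBigO c F) (h : ∀ s t, 1 < t → G s t = F s t) : TailBigO c G := by
  obtain ⟨K, hK⟩ := hF
  refine ⟨K, fun s hs hs1 => ?_⟩
  have hGF : EqOn (G s) (F s) (Ioi 1) := fun t ht => h s t ht
  rw [integrableOn_congr_fun hGF measurableSet_Ioi, setIntegral_congr_fun measurableSet_Ioi hGF]
  exact hK s hs hs1

theorem add (hF : TailBigO c F) (hG : TailBigO c G) : TailBigO c fun s t => F s t + G s t := by
  obtain ⟨K, hK⟩ := hF
  obtain ⟨L, hL⟩ := hG
  refine ⟨K + L, fun s hs hs1 => ?_⟩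
  obtain ⟨hFi, hFK⟩ := hK s hs hs1
  obtain ⟨hGi, hGL⟩ := hL s hs hs1
  refine ⟨hFi.add hGi, ?_⟩
  rw [integral_add hFi hGi, add_mul]
  exact (abs_add_le _ _).trans (add_le_add hFK hGL)

theorem const_mul (r : ℝ) (hF : TailBigO c F) : TailBigO c fun s t => r * F s t := by
  obtain ⟨K, hK⟩ := hF
  refine ⟨|r| * K, fun s hs hs1 => ⟨(hK s hs hs1).1.const_mul r, ?_⟩⟩
  rw [integral_const_mul, abs_mul, mul_assoc]
  exact mul_le_mul_of_nonneg_left (hK s hs hs1).2 (abs_nonneg r)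

theorem self_mul (hF : TailBigO c F) : TailBigO c fun s t => s * F s t := by
  obtain ⟨K, hK⟩ := hF
  refine ⟨K, fun s hs hs1 => ⟨(hK s hs hs1).1.const_mul s, ?_⟩⟩
  rw [integral_const_mul, abs_mul, abs_of_pos hs]
  exact (mul_le_of_le_one_left (abs_nonneg _) hs1).trans (hK s hs hs1).2

theorem of_abs_integral_le {b K : ℝ} (hb : -1 < b)
    (hF : ∀ s, 0 < s → IntegrableOn (F s) (Ioi 1))
    (h : ∀ s, 0 < s → |∫ t in Ioi 1, F s t| ≤ ∫ t in Ioi 1, K * powExp (s / 2) b t) :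
    TailBigO (b + 1) F := by
  refine ⟨|K| * (Real.Gamma (b + 1) * 2 ^ (b + 1)), fun s hs _ => ⟨hF s hs, (h s hs).trans ?_⟩⟩
  rw [integral_const_mul, mul_assoc |K|]
  have hnonneg : 0 ≤ ∫ t in Ioi 1, powExp (s / 2) b t :=
    setIntegral_nonneg measurableSet_Ioi fun t ht =>
      powExp_nonneg _ _ (zero_le_one.trans (le_of_lt ht))
  gcongr
  · exact le_abs_self K
  · exact setIntegral_Ioi_one_powExp_half_le hb hs

theorem of_abs_le {b K : ℝ} (hb : -1 < b) (hF : ∀ s, Measurable (F s))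
    (h : ∀ s t, 0 < s → 1 < t → |F s t| ≤ K * powExp (s / 2) b t) : TailBigO (b + 1) F :=
  of_abs_integral_le hb
    (fun s hs => integrableOn_Ioi_one_of_abs_le (half_pos hs) (hF s) fun t => h s t hs)
    fun s hs => abs_setIntegral_le_setIntegral measurableSet_Ioi
      ((integrableOn_powExp_Ioi_one b (half_pos hs)).const_mul K) fun t => h s t hs

theorem of_floor_cells {b K : ℝ} {F : ℝ → ℝ → ℝ → ℝ} (hb : -1 < b)
    (hF : ∀ s, 0 < s → IntegrableOn (fun t => F s ⌊t⌋ t) (Ioi 1))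
    (h : ∀ s, 0 < s → ∀ n : ℕ, 1 ≤ n →
      |∫ t in (n : ℝ)..(n + 1), F s n t| ≤ ∫ t in (n : ℝ)..(n + 1), K * powExp (s / 2) b t) :
    TailBigO (b + 1) fun s t => F s ⌊t⌋ t :=
  of_abs_integral_le hb hF fun s hs => abs_setIntegral_Ioi_one_le_of_floor_cells (hF s hs)
    ((integrableOn_powExp_Ioi_one b (half_pos hs)).const_mul K) (h s hs)

end TailBigO

/-! ### The cross term -/

/-- The increment of `t ^ a` since the last integer. -/
noncomputable def gap (a t : ℝ) : ℝ := t ^ a - (⌊t⌋ : ℝ) ^ a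

@[fun_prop]
theorem measurable_gap (a : ℝ) : Measurable (gap a) := by
  unfold gap
  fun_prop

@[fun_prop]
theorem measurable_gapCorr (s a : ℝ) : Measurable (gapCorr s a) := by
  unfold gapCorr
  fun_prop

@[fun_prop]
theorem measurable_gapMean (s a : ℝ) : Measurable (gapMean s a) := by
  unfold gapMean
  fun_prop

theorem one_le_floor {t : ℝ} (ht : 1 ≤ t) : (1 : ℝ) ≤ ⌊t⌋ := by
  exact_mod_cast Int.le_floor.2 (by simpa using ht)

theorem abs_gap_le {a t : ℝ} (ha : 1 ≤ a) (ht : 1 ≤ t) : |gap a t| ≤ a * t ^ (a - 1) :=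
  abs_rpow_sub_rpow_le ha (zero_le_one.trans (one_le_floor ht)) (zero_lt_one.trans_le ht)
    (Int.floor_le t) (Int.lt_floor_add_one t).le

theorem abs_gapCorr_le {s a t : ℝ} (hs : 0 ≤ s) (ha : 1 ≤ a) (ht : 0 < t) :
    |gapCorr s a t| ≤ (a + 1) * a * powExp (s / 2) (a - 2) t := by
  have : 0 ≤ a - 1 := by linarith
  have h₁ := mul_powExp_le_powExp_sub_one (a - 1) hs ht
  have h₂ := powExp_le_powExp_half (a - 2) hs ht
  rw [show a - 1 - 1 = a - 2 by ring] at h₁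
  have hp := powExp_nonneg s (a - 1) ht.le
  have hq := powExp_nonneg s (a - 2) ht.le
  rw [gapCorr, abs_of_nonneg (by positivity)]
  calc (s * a * powExp s (a - 1) t + a * (a - 1) * powExp s (a - 2) t) / 12
      ≤ a * (s * powExp s (a - 1) t) + a * (a - 1) * powExp s (a - 2) t := by
        rw [mul_comm s a, mul_assoc a s]
        exact div_le_self (by positivity) (by norm_num)
    _ ≤ a * (2 * powExp (s / 2) (a - 2) t) + a * (a - 1) * powExp (s / 2) (a - 2) t := by
      gcongr
    _ = _ := by ring

theorem abs_gapMean_le {s a t : ℝ} (hs : 0 ≤ s) (ha : 1 ≤ a) (ht : 1 ≤ t) :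
    |gapMean s a t| ≤ (a + 2) * a * powExp (s / 2) (a - 1) t := by
  have ht0 : 0 < t := zero_lt_one.trans_le ht
  have hp := powExp_nonneg s (a - 1) ht0.le
  calc |gapMean s a t| ≤ a / 2 * powExp s (a - 1) t + |gapCorr s a t| := by
        refine (abs_sub _ _).trans_eq ?_
        rw [abs_of_nonneg (by positivity)]
    _ ≤ a * powExp (s / 2) (a - 1) t + (a + 1) * a * powExp (s / 2) (a - 1) t := by
      gcongr
      · linarith
      · exact powExp_le_powExp_half (a - 1) hs ht0
      · refine (abs_gapCorr_le hs ha ht0).trans ?_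
        gcongr
        exact powExp_le_powExp (s / 2) (by linarith) ht
    _ = _ := by ring

theorem exists_abs_Pk_floor_le (k : ℕ) :
    ∃ C, 0 < C ∧ ∀ t : ℝ, 1 ≤ t → |Pk k ⌊t⌋| ≤ C * t ^ ((k : ℝ) / 2) := by
  obtain ⟨C, hC, h⟩ := exists_abs_Pk_le k
  refine ⟨2 * C, by positivity, fun t ht => ?_⟩
  have hn := one_le_floor ht
  calc |Pk k ⌊t⌋| ≤ C * (1 + (⌊t⌋ : ℝ) ^ ((k : ℝ) / 2)) := h _ (by linarith)
    _ ≤ C * (t ^ ((k : ℝ) / 2) + t ^ ((k : ℝ) / 2)) := by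
      gcongr
      · exact Real.one_le_rpow ht (by positivity)
      · exact Int.floor_le t
    _ = 2 * C * t ^ ((k : ℝ) / 2) := by ring

theorem tailBigO_gap_mul_gapCorr {a : ℝ} (ha : 1 < a) :
    TailBigO (2 * a - 2) fun s t => gap a t * gapCorr s a t := by
  rw [show 2 * a - 2 = 2 * a - 3 + 1 by ring]
  refine TailBigO.of_abs_le (K := a * ((a + 1) * a)) (by linarith) (fun s => by fun_prop)
    fun s t hs ht => ?_
  have ht0 : 0 < t := zero_lt_one.trans ht
  calc |gap a t * gapCorr s a t|
      ≤ a * t ^ (a - 1) * ((a + 1) * a * powExp (s / 2) (a - 2) t) := by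
        rw [abs_mul]
        gcongr
        · exact abs_gap_le ha.le ht.le
        · exact abs_gapCorr_le hs.le ha.le ht0
    _ = a * ((a + 1) * a) * (t ^ (a - 1) * powExp (s / 2) (a - 2) t) := by ring
    _ = _ := by
      rw [rpow_mul_powExp _ _ _ ht0]
      ring_nf

theorem tailBigO_gap_mul_powExp_sub {a : ℝ} (ha : 1 < a) :
    TailBigO (2 * a - 2) fun s t =>
      gap a t * powExp s (a - 1) t - a / 2 * powExp s (2 * a - 2) t := by
  rw [show 2 * a - 2 = 2 * a - 3 + 1 by ring]
  refine TailBigO.of_floor_cells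
    (F := fun s x t => (t ^ a - x ^ a) * powExp s (a - 1) t - a / 2 * powExp s (2 * a - 3 + 1) t)
    (K := 2 * a * (|a - 1| + 2) + a * (a - 1)) (by linarith) (fun s hs => ?_) fun s hs n hn => ?_
  · refine Integrable.sub ?_ ((integrableOn_powExp_Ioi_one _ hs).const_mul (a / 2))
    refine integrableOn_Ioi_one_of_abs_le (K := a) (b := 2 * a - 2) hs
      (f := fun t => gap a t * powExp s (a - 1) t) (by fun_prop) fun t ht => ?_
    have ht0 : 0 < t := zero_lt_one.trans ht
    have hp := powExp_nonneg s (a - 1) ht0.le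
    calc |gap a t * powExp s (a - 1) t| ≤ a * t ^ (a - 1) * powExp s (a - 1) t := by
          rw [abs_mul, abs_of_nonneg hp]
          gcongr
          exact abs_gap_le ha.le ht.le
      _ = _ := by
        rw [mul_assoc, rpow_mul_powExp _ _ _ ht0]
        ring_nf
  · have h := abs_intervalIntegral_gap_mul_powExp_sub_le (a - 1) hs.le ha.le
      (show (0 : ℝ) < n by exact_mod_cast hn)
    rwa [show a + (a - 1) - 1 = 2 * a - 3 + 1 by ring,
      show a + (a - 1) - 2 = 2 * a - 3 by ring] at h

theorem integrableOn_Pk_floor_mul_gap_sub_gapMean (k : ℕ) {s a : ℝ} (hs : 0 < s) (ha : 1 ≤ a) :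
    IntegrableOn (fun t => Pk k ⌊t⌋ * (gap a t * Real.exp (-(s * t)) - gapMean s a t))
      (Ioi 1) := by
  obtain ⟨C, hC, hP⟩ := exists_abs_Pk_floor_le k
  refine integrableOn_Ioi_one_of_abs_le (K := C * ((a + 3) * a)) (b := k / 2 + (a - 1))
    (half_pos hs) (by fun_prop) fun t ht => ?_
  have ht0 : 0 < t := zero_lt_one.trans ht
  have hgap : |gap a t * Real.exp (-(s * t))| ≤ a * powExp (s / 2) (a - 1) t :=
    calc |gap a t * Real.exp (-(s * t))| ≤ a * t ^ (a - 1) * Real.exp (-(s * t)) := by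
          rw [abs_mul, Real.abs_exp]
          gcongr
          exact abs_gap_le ha ht.le
      _ ≤ _ := by
        rw [mul_assoc, ← powExp]
        gcongr
        exact powExp_le_powExp_half _ hs.le ht0
  calc |Pk k ⌊t⌋ * (gap a t * Real.exp (-(s * t)) - gapMean s a t)|
      ≤ C * t ^ ((k : ℝ) / 2) *
        (a * powExp (s / 2) (a - 1) t + (a + 2) * a * powExp (s / 2) (a - 1) t) := by
        rw [abs_mul]
        gcongr
        · exact hP t ht.le
        · exact (abs_sub _ _).trans (add_le_add hgap (abs_gapMean_le hs.le ha ht.le))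
    _ = C * ((a + 3) * a) * (t ^ ((k : ℝ) / 2) * powExp (s / 2) (a - 1) t) := by ring
    _ = _ := by rw [rpow_mul_powExp _ _ _ ht0]

theorem rpow_mul_intervalIntegral_powExp_le {s a b x y : ℝ} (ha : 0 ≤ a) (hx : 0 < x)
    (hxy : x ≤ y) :
    x ^ a * ∫ t in x..y, powExp s b t ≤ ∫ t in x..y, powExp s (a + b) t := by
  rw [← intervalIntegral.integral_const_mul]
  refine intervalIntegral.integral_mono_on hxy
    ((intervalIntegrable_powExp s b hx hxy).const_mul _) (intervalIntegrable_powExp s _ hx hxy)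
    fun t ht => ?_
  have ht0 : 0 < t := hx.trans_le ht.1
  rw [← rpow_mul_powExp _ _ _ ht0]
  have hp := powExp_nonneg s b ht0.le
  gcongr
  exact ht.1

theorem tailBigO_Pk_floor_mul_gap_sub_gapMean {k : ℕ} (hk : 2 < k) :
    TailBigO (k - 2) fun s t =>
      Pk k ⌊t⌋ * (gap (k / 2) t * Real.exp (-(s * t)) - gapMean s (k / 2) t) := by
  have hk' : (2 : ℝ) < k := by exact_mod_cast hk
  have ha : (1 : ℝ) ≤ k / 2 := by linarith
  obtain ⟨C, hC, hP⟩ := exists_abs_Pk_floor_le k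
  set a : ℝ := k / 2 with hka
  let K : ℝ := 16 * a + 4 * a * (a - 1) + |a * (a - 1) * (a - 2)|
  have : 0 ≤ K := by
    have : 0 ≤ a - 1 := by linarith
    positivity
  rw [show (k : ℝ) - 2 = a + (a - 3) + 1 by rw [hka]; ring]
  refine TailBigO.of_floor_cells
    (F := fun s x t => Pk k x * ((t ^ a - x ^ a) * Real.exp (-(s * t)) - gapMean s a t))
    (K := C * K) (by linarith)
    (fun s hs => integrableOn_Pk_floor_mul_gap_sub_gapMean k hs ha) fun s hs n hn => ?_
  have hn' : (1 : ℝ) ≤ n := by exact_mod_cast hn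
  have hn0 : (0 : ℝ) < n := by linarith
  have hPn : |Pk k n| ≤ C * (n : ℝ) ^ a := by simpa using hP n hn'
  rw [intervalIntegral.integral_const_mul, intervalIntegral.integral_const_mul, abs_mul]
  calc |Pk k n| * |∫ t in (n : ℝ)..(n + 1),
          ((t ^ a - (n : ℝ) ^ a) * Real.exp (-(s * t)) - gapMean s a t)|
      ≤ C * (n : ℝ) ^ a * ∫ t in (n : ℝ)..(n + 1), K * powExp (s / 2) (a - 3) t := by
        gcongr
        exact abs_intervalIntegral_gap_sub_gapMean_le hs.le ha hn0
    _ = C * K * ((n : ℝ) ^ a * ∫ t in (n : ℝ)..(n + 1), powExp (s / 2) (a - 3) t) := by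
        rw [intervalIntegral.integral_const_mul]
        ring
    _ ≤ C * K * ∫ t in (n : ℝ)..(n + 1), powExp (s / 2) (a + (a - 3)) t := by
        gcongr
        exact rpow_mul_intervalIntegral_powExp_le (by linarith) hn0 (by linarith)

theorem tailBigO_Pk_mul_powExp (k : ℕ) (b : ℝ) {c : ℝ} (hc : 0 ≤ c) :
    TailBigO c fun s t => Pk k t * powExp s b t := by
  obtain ⟨C, hC⟩ := (laplaceFlat_Pk k).exists_abs_setIntegral_mul_powExp_le
    (laplaceIntegrable_Pk k) b
  obtain ⟨D, hD, hP⟩ := exists_abs_Pk_le k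
  refine ⟨C, fun s hs hs1 => ⟨?_, (hC s hs).trans (le_mul_of_one_le_right
    ((abs_nonneg _).trans (hC s hs)) (Real.one_le_rpow_of_pos_of_le_one_of_nonpos hs hs1
      (neg_nonpos.2 hc)))⟩⟩
  refine integrableOn_Ioi_one_of_abs_le (K := 2 * D) (b := k / 2 + b) hs (by fun_prop)
    fun t ht => ?_
  have ht0 : 0 < t := zero_lt_one.trans ht
  have hp := powExp_nonneg s b ht0.le
  calc |Pk k t * powExp s b t| ≤ D * (t ^ ((k : ℝ) / 2) + t ^ ((k : ℝ) / 2)) * powExp s b t := by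
        rw [abs_mul, abs_of_nonneg hp]
        gcongr
        refine (hP t ht0.le).trans ?_
        gcongr
        exact Real.one_le_rpow ht.le (by positivity)
    _ = 2 * D * (t ^ ((k : ℝ) / 2) * powExp s b t) := by ring
    _ = _ := by rw [rpow_mul_powExp _ _ _ ht0]

theorem tailBigO_Pk_mul_gapMean (k : ℕ) (a : ℝ) {c : ℝ} (hc : 0 ≤ c) :
    TailBigO c fun s t => Pk k t * gapMean s a t := by
  have h₁ := tailBigO_Pk_mul_powExp k (a - 1) hc
  have h₂ := tailBigO_Pk_mul_powExp k (a - 2) hc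
  refine (((h₁.const_mul (a / 2)).add (h₁.self_mul.const_mul (-a / 12))).add
    (h₂.const_mul (-(a * (a - 1)) / 12))).congr fun s t _ => ?_
  rw [gapMean, gapCorr]
  ring

/-- The integrand of the cross term, with Laplace variable `s`. -/
noncomputable def crossTerm (k : ℕ) (s t : ℝ) : ℝ :=
  Pk k ⌊t⌋ * ((⌊t⌋ : ℝ) ^ ((k : ℝ) / 2) - t ^ ((k : ℝ) / 2)) * Real.exp (-(s * t))

/- Replacing the gap by its mean in `crossTerm` leaves `-Pk k ⌊t⌋ * gapMean`, where
`Pk k ⌊t⌋ = Pk k t + Vk k * gap`: the average of `Pk` vanishes to every order, and the average of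
`gap * gapMean` produces the main term. -/
theorem tailBigO_crossTerm_add {k : ℕ} (hk : 2 < k) :
    TailBigO (k - 2) fun s t =>
      crossTerm k s t + (k : ℝ) ^ 2 * Vk k / 16 * powExp s (k - 2) t := by
  have hk' : (2 : ℝ) < k := by exact_mod_cast hk
  have ha : (1 : ℝ) < k / 2 := by linarith
  have hcell := tailBigO_Pk_floor_mul_gap_sub_gapMean hk
  have hflat := tailBigO_Pk_mul_gapMean k (k / 2) (sub_nonneg.2 hk'.le)
  have hprod := tailBigO_gap_mul_powExp_sub ha
  have hcorr := tailBigO_gap_mul_gapCorr ha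
  rw [mul_div_cancel₀ (k : ℝ) two_ne_zero] at hprod hcorr
  refine ((((hcell.const_mul (-1)).add (hflat.const_mul (-1))).add
    (hprod.const_mul (-(Vk k * (k / 4))))).add (hcorr.const_mul (Vk k))).congr fun s t _ => ?_
  rw [crossTerm, Pk_floor, gapMean, gap]
  ring

theorem exists_abs_crossTerm_le (k : ℕ) :
    ∃ C, ∀ s t : ℝ, 0 < s → t ∈ Ioc 0 1 → |crossTerm k s t| ≤ C := by
  obtain ⟨C, hC, hP⟩ := exists_abs_Pk_le k
  refine ⟨C * (1 + 1) * 1 * 1, fun s t hs ⟨ht, ht1⟩ => ?_⟩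
  have hn0 : (0 : ℝ) ≤ ⌊t⌋ := by exact_mod_cast Int.floor_nonneg.2 ht.le
  have hk : (0 : ℝ) ≤ (k : ℝ) / 2 := by positivity
  have hn := Real.rpow_le_one hn0 ((Int.floor_le t).trans ht1) hk
  have hPn : |Pk k ⌊t⌋| ≤ C * (1 + 1) := (hP _ hn0).trans (by gcongr)
  have hgap : |(⌊t⌋ : ℝ) ^ ((k : ℝ) / 2) - t ^ ((k : ℝ) / 2)| ≤ 1 :=
    abs_sub_le_of_nonneg_of_le (Real.rpow_nonneg hn0 _) hn (Real.rpow_nonneg ht.le _)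
      (Real.rpow_le_one ht.le ht1 hk)
  have hexp : Real.exp (-(s * t)) ≤ 1 := Real.exp_le_one_iff.2 (by nlinarith)
  rw [crossTerm, abs_mul, abs_mul, Real.abs_exp]
  gcongr

@[fun_prop]
theorem measurable_crossTerm (k : ℕ) (s : ℝ) : Measurable (crossTerm k s) := by
  unfold crossTerm
  fun_prop

theorem powExp_le_one {s b t : ℝ} (hs : 0 ≤ s) (hb : 0 ≤ b) (ht : t ∈ Ioc 0 1) :
    powExp s b t ≤ 1 :=
  mul_le_one₀ (Real.rpow_le_one ht.1.le ht.2 hb) (Real.exp_pos _).le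
    (Real.exp_le_one_iff.2 (neg_nonpos.2 (mul_nonneg hs ht.1.le)))

theorem integrableOn_Ioi_zero_and_abs_setIntegral_le {f : ℝ → ℝ} {C : ℝ} (hf : Measurable f)
    (hnear : ∀ t ∈ Ioc 0 1, |f t| ≤ C) (htail : IntegrableOn f (Ioi 1)) :
    IntegrableOn f (Ioi 0) ∧ |∫ t in Ioi 0, f t| ≤ C + |∫ t in Ioi 1, f t| := by
  have hint : IntegrableOn f (Ioi 0) := by
    rw [← Ioc_union_Ioi_eq_Ioi zero_le_one]
    exact (IntegrableOn.of_bound measure_Ioc_lt_top hf.aestronglyMeasurable C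
      (ae_restrict_of_forall_mem measurableSet_Ioc hnear)).union htail
  have hle : |∫ t in Ioc 0 1, f t| ≤ C := by
    simpa using
      norm_setIntegral_le_of_norm_le_const (f := f) (μ := volume) measure_Ioc_lt_top hnear
  refine ⟨hint, ?_⟩
  rw [← setIntegral_Ioc_add_Ioi hint]
  exact (abs_add_le _ _).trans (add_le_add_left hle _)

theorem exists_abs_setIntegral_crossTerm_add_le {k : ℕ} (hk : 2 < k) :
    ∃ K, ∀ s : ℝ, 0 < s → s ≤ 1 →
      |(∫ t in Ioi (0 : ℝ), crossTerm k s t) +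
        (k : ℝ) ^ 2 * Vk k / 16 * (Real.Gamma (k - 1) * s ^ (1 - (k : ℝ)))| ≤
        K * s ^ (2 - (k : ℝ)) := by
  have hk' : (2 : ℝ) < k := by exact_mod_cast hk
  obtain ⟨K, hK⟩ := tailBigO_crossTerm_add hk
  obtain ⟨C, hC⟩ := exists_abs_crossTerm_le k
  have hV := Vk_pos k
  set c : ℝ := (k : ℝ) ^ 2 * Vk k / 16
  have hc : 0 < c := by positivity
  refine ⟨|C + c| + K, fun s hs hs1 => ?_⟩
  obtain ⟨htail, htailK⟩ := hK s hs hs1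
  have hnear : ∀ t ∈ Ioc (0 : ℝ) 1, |crossTerm k s t + c * powExp s (k - 2) t| ≤ C + c := by
    intro t ht
    refine (abs_add_le _ _).trans (add_le_add (hC s t hs ht) ?_)
    rw [abs_of_nonneg (mul_nonneg hc.le (powExp_nonneg _ _ ht.1.le))]
    exact mul_le_of_le_one_right hc.le (powExp_le_one hs.le (by linarith) ht)
  obtain ⟨hint, hle⟩ := integrableOn_Ioi_zero_and_abs_setIntegral_le (by fun_prop) hnear htail
  have hpow : IntegrableOn (fun t => c * powExp s (k - 2) t) (Ioi 0) :=
    (integrableOn_powExp_Ioi_zero (by linarith) hs).const_mul c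
  have hcross : IntegrableOn (crossTerm k s) (Ioi 0) :=
    (hint.sub hpow).congr_fun (fun t _ => add_sub_cancel_right _ _) measurableSet_Ioi
  rw [integral_add hcross hpow, integral_const_mul, integral_powExp_Ioi_zero (by linarith) hs,
    show (k : ℝ) - 2 + 1 = k - 1 by ring, neg_sub] at hle
  rw [neg_sub] at htailK
  rw [add_mul]
  exact hle.trans (add_le_add ((le_abs_self _).trans (le_mul_of_one_le_right (abs_nonneg _)
    (Real.one_le_rpow_of_pos_of_le_one_of_nonpos hs hs1 (by linarith)))) htailK)

theorem pi_rpow_mul_div_Gamma_eq {k : ℕ} (hk : k ≠ 0) (G : ℝ) :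
    Real.pi ^ ((k : ℝ) / 2) * k * G * Vk k / (4 * Real.Gamma ((k : ℝ) / 2)) =
      2 * Vk k * ((k : ℝ) ^ 2 * Vk k / 16 * G) := by
  have hk' : (0 : ℝ) < (k : ℝ) / 2 := by positivity
  have hG := (Real.Gamma_pos_of_pos hk').ne'
  have hpi : Real.pi ^ ((k : ℝ) / 2) = Vk k * (k / 2 * Real.Gamma ((k : ℝ) / 2)) := by
    rw [Vk, Real.Gamma_add_one hk'.ne']
    field_simp
  rw [hpi]
  field_simp
  ring

theorem laplace_cross_term_general (k : ℕ) (hk : 3 ≤ k) :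
    ∃ A : ℝ, 0 < A ∧ ∀ X : ℝ, 1 ≤ X →
      |2 * Vk k * (∫ t in Set.Ioi (0 : ℝ),
            Pk k ((⌊t⌋ : ℝ)) * (((⌊t⌋ : ℝ)) ^ ((k : ℝ) / 2) - t ^ ((k : ℝ) / 2))
              * Real.exp (-t / X))
          + (Real.pi ^ ((k : ℝ) / 2) * (k : ℝ) * Real.Gamma ((k : ℝ) - 1) * Vk k
              / (4 * Real.Gamma ((k : ℝ) / 2))) * X ^ ((k : ℝ) - 1)|
        ≤ A * X ^ ((k : ℝ) - 2) := by
  obtain ⟨K, hK⟩ := exists_abs_setIntegral_crossTerm_add_le hk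
  have hV := Vk_pos k
  refine ⟨2 * Vk k * (|K| + 1), by positivity, fun X hX => ?_⟩
  have hX0 : 0 < X := by linarith
  have hmain := hK X⁻¹ (by positivity) (inv_le_one_of_one_le₀ hX)
  have hexp (t : ℝ) : -t / X = -(X⁻¹ * t) := by field_simp
  rw [Real.inv_rpow hX0.le, Real.inv_rpow hX0.le, ← Real.rpow_neg hX0.le,
    ← Real.rpow_neg hX0.le, neg_sub, neg_sub] at hmain
  simp only [crossTerm] at hmain
  simp only [hexp]
  rw [pi_rpow_mul_div_Gamma_eq (by omega), mul_assoc (2 * Vk k), mul_assoc (_ * Vk k / 16),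
    ← mul_add, abs_mul, abs_of_pos (by positivity : 0 < 2 * Vk k), mul_assoc (2 * Vk k) (|K| + 1)]
  gcongr
  refine hmain.trans ?_
  gcongr
  exact (le_abs_self K).trans (le_add_of_nonneg_right zero_le_one)

end

/-- Laplace transform of the cross term. -/
theorem laplace_cross_term (k : ℕ) (hk : 3 ≤ k) :
    ∀ ε : ℝ, 0 < ε → ∃ A : ℝ, 0 < A ∧ ∀ X : ℝ, 2 ≤ X →
      |2 * Vk k * (∫ t in Set.Ioi (0 : ℝ),
            Pk k ((⌊t⌋ : ℝ)) * (((⌊t⌋ : ℝ)) ^ ((k : ℝ) / 2) - t ^ ((k : ℝ) / 2))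
              * Real.exp (-t / X))
          + (Real.pi ^ ((k : ℝ) / 2) * (k : ℝ) * Real.Gamma ((k : ℝ) - 1) * Vk k
              / (4 * Real.Gamma ((k : ℝ) / 2))) * X ^ ((k : ℝ) - 1)|
        ≤ A * X ^ ((k : ℝ) - 2 + ε) := by
  intro ε hε
  obtain ⟨A, hA, h⟩ := laplace_cross_term_general k hk
  refine ⟨A, hA, fun X hX => (h X (by linarith)).trans ?_⟩
  gcongr <;> linarith
end
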